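/- (Calderón–Vaillancourt type L² boundedness.) There exist a constant C > 0 and an integer N ∈ ℕ, depending only on n and f, such that ‖Op^t_ℏ(a)u‖_{L²(ℝⁿ)} ≤ C |a|_{S^0_f, N} ‖u‖_{L²(ℝⁿ)} for all a ∈ S^0_f(ℝ^{2n}), all u ∈ C_c^∞(ℝⁿ), all t ∈ [0,1] and all ℏ ∈ (0,1]. -/

import Mathlib

open MeasureTheory Finset

noncomputable section

/-- Points of `ℝⁿ` (with `n = d + 1`) split as `q = (r, θ) ∈ ℝ × ℝ^d`. -/
abbrev Q (d : ℕ) : Type := ℝ × (Fin d → ℝ)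

/-- The coordinate direction `∂_r`. -/
def eR (d : ℕ) : Q d := ((1 : ℝ), 0)

/-- The coordinate direction `∂_{θ_i}`. -/
def eTh (d : ℕ) (i : Fin d) : Q d := ((0 : ℝ), Pi.single i 1)

/-- Directional derivative of a complex-valued function. -/
def dirD {E : Type*} [NormedAddCommGroup E] [NormedSpace ℝ E]
    (v : E) (g : E → ℂ) : E → ℂ :=
  fun x => fderiv ℝ g x v

/-- Multiindices `α = (α₀, α')` split as in the paper. -/
abbrev MIdx (d : ℕ) : Type := ℕ × (Fin d → ℕ)

/-- `|α| = α₀ + |α'|`. -/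
def deg {d : ℕ} (α : MIdx d) : ℕ := α.1 + ∑ i, α.2 i

/-- `|α'|`, the angular part of a multiindex. -/
def degA {d : ℕ} (α : MIdx d) : ℕ := ∑ i, α.2 i

/-- `∂_q^α` acting on functions on `ℝⁿ = ℝ × ℝ^d`. -/
def mderiv1 {d : ℕ} (α : MIdx d) (g : Q d → ℂ) : Q d → ℂ :=
  (dirD (eR d))^[α.1] <|
    (List.finRange d).foldr (fun i h => (dirD (eTh d i))^[α.2 i] h) g

/-- `∂_q^α ∂_p^β` acting on functions on phase space. -/
def mderiv2 {d : ℕ} (α β : MIdx d) (g : Q d × Q d → ℂ) : Q d × Q d → ℂ :=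
  (dirD ((eR d, 0) : Q d × Q d))^[α.1] <|
  (List.finRange d).foldr (fun i h => (dirD ((eTh d i, 0) : Q d × Q d))^[α.2 i] h) <|
  (dirD (((0 : Q d), eR d) : Q d × Q d))^[β.1] <|
  (List.finRange d).foldr (fun i h => (dirD (((0 : Q d), eTh d i) : Q d × Q d))^[β.2 i] h) g

/-- `∂_q^α ∂_p^β ∂_{q'}^γ` acting on amplitudes `a(q, p, q')`. -/
def mderiv3 {d : ℕ} (α β γ : MIdx d) (g : Q d × Q d × Q d → ℂ) : Q d × Q d × Q d → ℂ :=
  (dirD ((eR d, 0, 0) : Q d × Q d × Q d))^[α.1] <|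
  (List.finRange d).foldr (fun i h => (dirD ((eTh d i, 0, 0) : Q d × Q d × Q d))^[α.2 i] h) <|
  (dirD (((0 : Q d), eR d, 0) : Q d × Q d × Q d))^[β.1] <|
  (List.finRange d).foldr (fun i h => (dirD (((0 : Q d), eTh d i, 0) : Q d × Q d × Q d))^[β.2 i] h) <|
  (dirD (((0 : Q d), (0 : Q d), eR d) : Q d × Q d × Q d))^[γ.1] <|
  (List.finRange d).foldr (fun i h => (dirD (((0 : Q d), (0 : Q d), eTh d i) : Q d × Q d × Q d))^[γ.2 i] h) g

/-- `⟨p⟩ = (1 + ρ² + |η|²)^{1/2}`. -/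
def brP {d : ℕ} (p : Q d) : ℝ := Real.sqrt (1 + p.1 ^ 2 + ∑ i, (p.2 i) ^ 2)

/-- `⟨ρ ⊕ f(r)⁻¹ η⟩` evaluated at a phase-space point. -/
def brF {d : ℕ} (f : ℝ → ℝ) (x : Q d × Q d) : ℝ :=
  Real.sqrt (1 + x.2.1 ^ 2 + ∑ i, (x.2.2 i / f x.1.1) ^ 2)

/-- The standing assumption on `f : ℝ → [1, ∞)`: smooth, `f ≥ 1`, and all derivatives
of `log f` of order `≥ 1` are bounded. -/
def GoodF (f : ℝ → ℝ) : Prop :=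
  ContDiff ℝ (⊤ : ℕ∞) f ∧ (∀ r, 1 ≤ f r) ∧
    ∀ j : ℕ, 1 ≤ j → ∃ C : ℝ, ∀ r, |iteratedDeriv j (fun s => Real.log (f s)) r| ≤ C

/-- Membership in the symbol class `S^m_f(ℝ^{2n})`. -/
def IsSymbol {d : ℕ} (f : ℝ → ℝ) (m : ℝ) (a : Q d × Q d → ℂ) : Prop :=
  ContDiff ℝ (⊤ : ℕ∞) a ∧
    ∀ α β : MIdx d, ∃ C : ℝ, ∀ x : Q d × Q d,
      ‖mderiv2 α β a x‖ ≤ C * f x.1.1 ^ ((degA α : ℝ) - (degA β : ℝ)) * brF f x ^ (m - (deg β : ℝ))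

/-- The finite set of multiindices of length `≤ N`. -/
def idxSet (d N : ℕ) : Finset (MIdx d) :=
  ((Finset.range (N + 1)) ×ˢ Fintype.piFinset fun _ : Fin d => Finset.range (N + 1)).filter
    fun α => deg α ≤ N

/-- The seminorm `|a|_{S^m_f, N}`. -/
def symNorm {d : ℕ} (f : ℝ → ℝ) (m : ℝ) (N : ℕ) (a : Q d × Q d → ℂ) : ℝ :=
  ∑ α ∈ idxSet d N, ∑ β ∈ idxSet d N,
    if deg α + deg β ≤ N then
      ⨆ x : Q d × Q d,
        f x.1.1 ^ (-(degA α : ℝ) + (degA β : ℝ)) * brF f x ^ (-m + (deg β : ℝ)) *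
          ‖mderiv2 α β a x‖
    else 0

/-- `p · q`. -/
def qdot {d : ℕ} (p q : Q d) : ℝ := p.1 * q.1 + ∑ i, p.2 i * q.2 i

/-- The oscillating factor `e^{i p · v / ℏ}`. -/
def ephase {d : ℕ} (ℏ : ℝ) (p v : Q d) : ℂ :=
  Complex.exp (Complex.I * Complex.ofReal (qdot p v) / Complex.ofReal ℏ)

/-- The quantization `Op^t_ℏ(a)` of a symbol, acting on functions (trivialized half-densities). -/
def Op {d : ℕ} (ℏ t : ℝ) (a : Q d × Q d → ℂ) (u : Q d → ℂ) : Q d → ℂ :=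
  fun q => ((2 * Real.pi * ℏ) ^ (d + 1) : ℝ)⁻¹ •
    ∫ p : Q d, ∫ q' : Q d,
      a (t • q + (1 - t) • q', p) * ephase ℏ p (q - q') * u q'

/-- Membership in `C_c^∞(ℝⁿ)`. -/
def IsCc {d : ℕ} (u : Q d → ℂ) : Prop := ContDiff ℝ (⊤ : ℕ∞) u ∧ HasCompactSupport u

/-- The `L²` inner product `⟨w, v⟩ = ∫ w \bar v`. -/
def l2inner {d : ℕ} (w v : Q d → ℂ) : ℂ := ∫ q : Q d, w q * (starRingEnd ℂ) (v q)

/-- The `L²` norm. -/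
def l2norm {d : ℕ} (u : Q d → ℂ) : ℝ := (∫ q : Q d, ‖u q‖ ^ 2) ^ (1 / 2 : ℝ)

/-- `Σ_{|β| ≤ N} sup |∂^β u|`. -/
def ckNorm {d : ℕ} (N : ℕ) (u : Q d → ℂ) : ℝ :=
  ∑ β ∈ idxSet d N, ⨆ q : Q d, ‖mderiv1 β u q‖

/-- `⟨ρ ⊕ f(tr + (1-t)r')⁻¹ η⟩` evaluated at a point `(q, p, q')`. -/
def brFA {d : ℕ} (f : ℝ → ℝ) (t : ℝ) (x : Q d × Q d × Q d) : ℝ :=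
  Real.sqrt (1 + x.2.1.1 ^ 2 + ∑ i, (x.2.1.2 i / f (t * x.1.1 + (1 - t) * x.2.2.1)) ^ 2)

/-- Membership in the amplitude class `BS^m_{f,t}(ℝ^{3n})`. -/
def IsAmp {d : ℕ} (f : ℝ → ℝ) (m t : ℝ) (a : Q d × Q d × Q d → ℂ) : Prop :=
  ContDiff ℝ (⊤ : ℕ∞) a ∧
    ∀ α β γ : MIdx d, ∃ C : ℝ, ∀ x : Q d × Q d × Q d,
      ‖mderiv3 α β γ a x‖ ≤
        C * f (t * x.1.1 + (1 - t) * x.2.2.1) ^ ((degA α : ℝ) - (degA β : ℝ) + (degA γ : ℝ)) *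
          brFA f t x ^ (m - (deg β : ℝ))

/-- The seminorm `|a|_{BS^m_{f,t}, N}`. -/
def ampNorm {d : ℕ} (f : ℝ → ℝ) (m t : ℝ) (N : ℕ) (a : Q d × Q d × Q d → ℂ) : ℝ :=
  ∑ α ∈ idxSet d N, ∑ β ∈ idxSet d N, ∑ γ ∈ idxSet d N,
    if deg α + deg β + deg γ ≤ N then
      ⨆ x : Q d × Q d × Q d,
        f (t * x.1.1 + (1 - t) * x.2.2.1) ^ (-(degA α : ℝ) + (degA β : ℝ) - (degA γ : ℝ)) *
          brFA f t x ^ (-m + (deg β : ℝ)) * ‖mderiv3 α β γ a x‖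
    else 0

/-- The quantization of an amplitude `a(q, p, q')`. -/
def OpAmp {d : ℕ} (ℏ : ℝ) (a : Q d × Q d × Q d → ℂ) (u : Q d → ℂ) : Q d → ℂ :=
  fun q => ((2 * Real.pi * ℏ) ^ (d + 1) : ℝ)⁻¹ •
    ∫ p : Q d, ∫ q' : Q d, a (q, p, q') * ephase ℏ p (q - q') * u q'


namespace CV
open FourierTransform SchwartzMap in
lemma plancherel_aux {V : Type*} [NormedAddCommGroup V] [InnerProductSpace ℝ V]
    [FiniteDimensional ℝ V] [MeasurableSpace V] [BorelSpace V] (φ : V → ℂ)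
    (h1 : Integrable φ volume) (h2 : MemLp φ 2 volume) :
    ∫⁻ ξ, ‖𝓕 φ ξ‖ₑ ^ 2 = ∫⁻ x, ‖φ x‖ₑ ^ 2 := by
  set Φ : Lp ℂ 2 (volume : Measure V) := h2.toLp φ with hΦ
  have key : (𝓕 Φ : Lp ℂ 2 (volume : Measure V)) =ᵐ[volume] 𝓕 φ := by
    apply ae_eq_of_integral_contDiff_smul_eq
    · exact (Lp.memLp (𝓕 Φ)).locallyIntegrable (by norm_num)
    · have : Continuous (𝓕 φ) := by
        apply VectorFourier.fourierIntegral_continuous Real.continuous_fourierChar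
          (by exact continuous_inner) h1
      exact this.locallyIntegrable
    · intro g hg hgc
      have hgc' : HasCompactSupport (fun x => (g x : ℂ)) := HasCompactSupport.comp_left (g := Complex.ofReal) hgc Complex.ofReal_zero
      have hg' : ContDiff ℝ (⊤ : ℕ∞) (fun x => (g x : ℂ)) := Complex.ofRealCLM.contDiff.comp hg
      let G : 𝓢(V, ℂ) := hgc'.toSchwartzMap hg'
      have e1 := congrArg (fun T => T G) (Lp.fourier_toTemperedDistribution_eq Φ)
      simp only [TemperedDistribution.fourier_apply, Lp.toTemperedDistribution_apply] at e1
      have e2 := VectorFourier.integral_fourierIntegral_smul_eq_flip (μ := volume) (ν := volume)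
        (L := innerₗ V) (g := (fun x => (g x : ℂ))) Real.continuous_fourierChar
        (by exact continuous_inner) h1 G.integrable
      have hl : ∫ x, g x • (𝓕 Φ : Lp ℂ 2 (volume : Measure V)) x = ∫ x, G x • (𝓕 Φ : Lp ℂ 2 (volume : Measure V)) x := by
        congr 1
      have hr : ∫ x, g x • 𝓕 φ x = ∫ x, (𝓕 φ x) • (g x : ℂ) := by
        congr 1; ext x; simp [mul_comm]
      rw [hl, ← e1, hr]
      refine Eq.trans ?_ e2.symm
      apply integral_congr_ae
      filter_upwards [h2.coeFn_toLp] with x hx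
      rw [hΦ, hx, flip_innerₗ, smul_eq_mul, smul_eq_mul, mul_comm]
      rfl
  have n1 : eLpNorm (𝓕 φ) 2 volume = eLpNorm φ 2 volume := by
    rw [← eLpNorm_congr_ae key, ← eLpNorm_congr_ae h2.coeFn_toLp, ← Lp.enorm_def, ← Lp.enorm_def]
    exact (Lp.fourierTransformₗᵢ V ℂ).enorm_map Φ
  have hh : ∀ ψ : V → ℂ, eLpNorm ψ 2 volume ^ 2 = ∫⁻ x, ‖ψ x‖ₑ ^ 2 := by
    intro ψ
    have := eLpNorm_nnreal_pow_eq_lintegral (μ := (volume : Measure V)) (f := ψ) (p := 2) (by norm_num)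
    simpa using this
  rw [← hh, ← hh, n1]
open FourierTransform in
lemma plancherel_Q {d : ℕ} (φ : Q d → ℂ) (h1 : Integrable φ volume) (h2 : MemLp φ 2 volume) :
    ∫⁻ p : Q d, ‖∫ q : Q d, φ q * Complex.exp (Complex.I * ((-2 * Real.pi : ℝ) * qdot p q : ℝ))‖ₑ ^ 2
      = ∫⁻ q, ‖φ q‖ₑ ^ 2 := by
  let E := (MeasurableEquiv.toLp 2 (Fin (d+1) → ℝ)).symm.trans
    (MeasurableEquiv.piFinSuccAbove (fun _ => ℝ) 0)
  have hE : MeasurePreserving E := 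
    (volume_preserving_piFinSuccAbove (fun _ => ℝ) 0).comp 
      (EuclideanSpace.volume_preserving_symm_measurableEquiv_toLp (Fin (d+1)))
  have hin : ∀ x ξ, inner ℝ x ξ = qdot (E ξ) (E x) := by
    intro x ξ
    simp [qdot, E, PiLp.inner_apply, Fin.sum_univ_succ, MeasurableEquiv.piFinSuccAbove, Fin.tail]
  have h1' : Integrable (φ ∘ E) volume := (hE.integrable_comp_emb E.measurableEmbedding).2 h1
  have h2' : MemLp (φ ∘ E) 2 volume := h2.comp_measurePreserving hE
  have := plancherel_aux _ h1' h2'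
  rw [← hE.lintegral_comp_emb E.measurableEmbedding, ← hE.lintegral_comp_emb E.measurableEmbedding]
  refine Eq.trans ?_ this
  apply lintegral_congr
  intro ξ
  rw [← hE.integral_comp E.measurableEmbedding, Real.fourier_eq]
  congr 3
  ext x
  rw [hin, Circle.smul_def, Real.fourierChar_apply, smul_eq_mul, mul_comm]
  simp only [Function.comp]
  congr 2
  push_cast
  ring

instance instHaarQ (d : ℕ) : (volume : Measure (Q d)).IsAddHaarMeasure :=
  inferInstanceAs ((volume : Measure ℝ).prod (volume : Measure (Fin d → ℝ))).IsAddHaarMeasure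

lemma finrank_Q (d : ℕ) : Module.finrank ℝ (Q d) = d + 1 := by
  simp [add_comm]

lemma plancherel_c {d : ℕ} (φ : Q d → ℂ) (h1 : Integrable φ volume) (h2 : MemLp φ 2 volume)
    (c : ℝ) (hc : c ≠ 0) :
    ∫⁻ p : Q d, ‖∫ q : Q d, φ q * Complex.exp (Complex.I * (c * qdot p q : ℝ))‖ₑ ^ 2
      = ENNReal.ofReal ((2 * Real.pi / |c|) ^ (d+1)) * ∫⁻ q, ‖φ q‖ₑ ^ 2 := by
  rw [← plancherel_Q φ h1 h2]
  set G : Q d → ENNReal := fun p => ‖∫ q : Q d, φ q * 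
    Complex.exp (Complex.I * ((-2 * Real.pi : ℝ) * qdot p q : ℝ))‖ₑ ^ 2 with hG
  set R : ℝ := - c / (2 * Real.pi) with hR
  have hR0 : R ≠ 0 := by
    have := Real.pi_pos; rw [hR]; exact div_ne_zero (neg_ne_zero.2 hc) (by positivity)
  have e : ∀ p : Q d, ‖∫ q : Q d, φ q * Complex.exp (Complex.I * (c * qdot p q : ℝ))‖ₑ ^ 2 
      = G (R • p) := by
    intro p
    have : ∀ q : Q d, (-2 * Real.pi : ℝ) * qdot (R • p) q = c * qdot p q := by
      intro q
      have : qdot (R • p) q = R * qdot p q := by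
        simp [qdot, mul_add, mul_sum, mul_assoc]
      rw [this, hR]
      have := Real.pi_pos
      field_simp
    simp only [hG, this]
  simp_rw [e]
  have key : ∫⁻ p, G p ∂(Measure.map (R • ·) (volume : Measure (Q d))) = ∫⁻ p, G (R • p) :=
    lintegral_map_equiv G (Homeomorph.smulOfNeZero R hR0 (α := Q d)).toMeasurableEquiv
  rw [← key, Measure.map_addHaar_smul _ hR0, lintegral_smul_measure, finrank_Q]
  have hh : |(R ^ (d+1))⁻¹| = (2 * Real.pi / |c|) ^ (d+1) := by
    rw [hR, abs_inv, abs_pow, ← inv_pow, abs_div, abs_neg, inv_div, abs_of_pos (by positivity)]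
  rw [hh]
  rfl
end CV

namespace CV

def G (k : ℕ) (τ : ℝ) : ℝ := if 0 < τ then τ ^ k * Real.exp (-τ) else 0

lemma G_eq (k : ℕ) : G k = (Set.Ioi (0:ℝ)).indicator (fun τ => τ ^ k * Real.exp (-τ)) := by
  ext τ; simp [G, Set.indicator_apply]

lemma G_nonneg (k : ℕ) (τ : ℝ) : 0 ≤ G k τ := by
  unfold G; split_ifs with h <;> positivity

lemma G_int (k : ℕ) : Integrable (G k) := by
  rw [G_eq, integrable_indicator_iff measurableSet_Ioi]
  have := Real.GammaIntegral_convergent (s := k + 1) (by positivity)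
  refine this.congr_fun ?_ measurableSet_Ioi
  intro x hx
  simp [mul_comm]

lemma G_cont (k : ℕ) (hk : 1 ≤ k) : Continuous (G k) := by
  have : G k = fun τ => (max τ 0) ^ k * Real.exp (-τ) := by
    ext τ; unfold G; split_ifs with h
    · rw [max_eq_left h.le]
    · rw [max_eq_right (not_lt.1 h), zero_pow (by omega), zero_mul]
  rw [this]; fun_prop

lemma G_succ (k j : ℕ) (m : ℝ) : m ^ j * G k m = G (k + j) m := by
  unfold G; split_ifs <;> ring

lemma G_gamma_int (k : ℕ) (x : ℝ) :
    Integrable (fun τ : ℝ => (G k τ : ℂ) * Complex.exp (-(Complex.I * x * τ))) := by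
  refine (G_int k).ofReal.mul_bdd (c := 1) (by fun_prop) ?_
  refine Filter.Eventually.of_forall fun τ => ?_
  rw [Complex.norm_exp]; simp

lemma tend_aux (k : ℕ) (x : ℝ) : Filter.Tendsto (fun τ : ℝ => ((τ ^ k * Real.exp (-τ) : ℝ) : ℂ) *
    Complex.exp (-(Complex.I * x * τ))) Filter.atTop (nhds 0) := by
  rw [tendsto_zero_iff_norm_tendsto_zero]
  have := Real.tendsto_pow_mul_exp_neg_atTop_nhds_zero k
  have h2 := (tendsto_zero_iff_norm_tendsto_zero).1 this
  refine h2.congr fun τ => ?_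
  rw [norm_mul (_ : ℂ), Complex.norm_real, Complex.norm_exp]; simp

lemma der_aux (k : ℕ) (x τ : ℝ) : HasDerivAt (fun τ : ℝ => ((τ ^ k * Real.exp (-τ) : ℝ) : ℂ) *
    Complex.exp (-(Complex.I * x * τ)))
    (((k * τ ^ (k-1) * Real.exp (-τ) : ℝ) : ℂ) * Complex.exp (-(Complex.I * x * τ))
     - (1 + Complex.I * x) * (((τ ^ k * Real.exp (-τ) : ℝ) : ℂ) * Complex.exp (-(Complex.I * x * τ)))) τ := by
  have h1 : HasDerivAt (fun τ : ℝ => τ ^ k * Real.exp (-τ))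
     (k * τ ^ (k-1) * Real.exp (-τ) + τ ^ k * (Real.exp (-τ) * (-1))) τ :=
    (hasDerivAt_pow k τ).mul ((hasDerivAt_neg τ).exp)
  have h2 : HasDerivAt (fun τ : ℝ => Complex.exp (-(Complex.I * x * τ)))
      (Complex.exp (-(Complex.I * x * τ)) * (-(Complex.I * x))) τ := by
    have : HasDerivAt (fun τ : ℝ => -(Complex.I * x * τ)) (-(Complex.I * x)) τ := by
      have h3 := ((Complex.ofRealCLM.hasDerivAt (x := τ)).const_mul (Complex.I * x)).neg
      simp only [Complex.ofRealCLM_apply, Complex.ofReal_one, mul_one] at h3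
      exact h3
    exact this.cexp
  refine ((h1.ofReal_comp).mul h2).congr_deriv ?_
  push_cast; ring

lemma G_ind (k : ℕ) (x : ℝ) : (fun τ : ℝ => (G k τ : ℂ) * Complex.exp (-(Complex.I * x * τ))) =
   (Set.Ioi (0:ℝ)).indicator (fun τ => ((τ ^ k * Real.exp (-τ) : ℝ) : ℂ) * Complex.exp (-(Complex.I * x * τ))) := by
  ext τ
  simp only [G, Set.indicator_apply, Set.mem_Ioi]
  split_ifs <;> simp

lemma G_gamma (k : ℕ) (x : ℝ) : ∫ τ : ℝ, (G k τ : ℂ) * Complex.exp (-(Complex.I * x * τ)) =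
    k.factorial / (1 + Complex.I * x) ^ (k + 1) := by
  have hne : (1 + Complex.I * x : ℂ) ≠ 0 := by
    intro h; have := congrArg Complex.re h; simp at this
  have hi : ∀ k, IntegrableOn (fun τ => ((τ ^ k * Real.exp (-τ) : ℝ) : ℂ) * Complex.exp (-(Complex.I * x * τ))) (Set.Ioi 0) := by
    intro k
    have := G_gamma_int k x
    rwa [G_ind, integrable_indicator_iff measurableSet_Ioi] at this
  rw [G_ind, integral_indicator measurableSet_Ioi]
  induction k with
  | zero =>
    have h := integral_Ioi_of_hasDerivAt_of_tendsto' (a := 0) (fun τ _ => der_aux 0 x τ) 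
      (by have h3 := ((hi 0).const_mul (1 + Complex.I * x)).neg; 
          refine IntegrableOn.congr_fun h3 ?_ measurableSet_Ioi; intro τ _; simp) (tend_aux 0 x)
    simp only [Nat.cast_zero, zero_mul, Complex.ofReal_zero, zero_sub, integral_neg, integral_const_mul] at h
    rw [eq_div_iff (pow_ne_zero _ hne)]
    simp at h ⊢
    rw [mul_comm, h]
  | succ k ih =>
    have h := integral_Ioi_of_hasDerivAt_of_tendsto' (a := 0) (fun τ _ => der_aux (k+1) x τ) 
      (by have h3 := ((hi k).const_mul ((k:ℂ)+1)).sub ((hi (k+1)).const_mul (1 + Complex.I * x)); 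
          refine IntegrableOn.congr_fun h3 ?_ measurableSet_Ioi; intro τ _; simp; ring) (tend_aux (k+1) x)
    have e : ∀ τ : ℝ, (((((k + 1 : ℕ):ℝ) * τ ^ (k+1-1) * Real.exp (-τ) : ℝ) : ℂ) * Complex.exp (-(Complex.I * x * τ))) = ((k:ℂ)+1) * (((τ ^ k * Real.exp (-τ) : ℝ) : ℂ) * Complex.exp (-(Complex.I * x * τ))) := by
      intro τ; push_cast; ring
    simp_rw [e] at h
    rw [integral_sub ((hi k).const_mul _) ((hi (k+1)).const_mul _), integral_const_mul, integral_const_mul, ih] at h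
    simp only [zero_pow (Nat.succ_ne_zero k), zero_mul, Complex.ofReal_zero, sub_zero] at h
    rw [eq_div_iff (pow_ne_zero _ hne), pow_succ', ← mul_assoc, mul_comm _ (1 + Complex.I * (x:ℂ))]
    rw [← sub_eq_zero.1 h, Nat.factorial_succ]
    push_cast; field_simp

def Ga (k : ℕ) (w : ℝ) : ℂ := k.factorial / (1 + Complex.I * (2 * Real.pi * w : ℝ)) ^ (k + 1)

lemma Ga_int (k : ℕ) (hk : 1 ≤ k) : Integrable (Ga k) := by
  have hne : ∀ w : ℝ, (1 + Complex.I * w : ℂ) ≠ 0 := by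
    intro w h; have := congrArg Complex.re h; simp at this
  have h1 : Integrable (fun w : ℝ => (k.factorial : ℝ) * (1 + (2 * Real.pi * w) ^ 2)⁻¹) := 
    ((integrable_inv_one_add_sq.comp_mul_left' (R := 2 * Real.pi) (by positivity)).const_mul _)
  refine h1.mono' ?_ ?_
  · apply Continuous.aestronglyMeasurable
    unfold Ga
    exact continuous_const.div (by fun_prop) (fun w => pow_ne_zero _ (hne _))
  · refine Filter.Eventually.of_forall fun w => ?_
    unfold Ga
    rw [norm_div, norm_pow, div_eq_mul_inv, Complex.norm_natCast]
    gcongr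
    set y := 2 * Real.pi * w
    have h2 : ‖(1 + Complex.I * (y:ℝ) : ℂ)‖ ^ 2 = 1 + y ^ 2 := by
      rw [← Complex.normSq_eq_norm_sq, Complex.normSq_apply]; simp; ring
    rw [← h2]
    apply pow_le_pow_right₀ _ (by omega)
    nlinarith [norm_nonneg (1 + Complex.I * (y:ℝ) : ℂ), sq_nonneg y]

open FourierTransform in
lemma G_inv (k : ℕ) (hk : 1 ≤ k) (m : ℝ) :
    (G k m : ℂ) = ∫ w : ℝ, Ga k w * Complex.exp (Complex.I * (2 * Real.pi * w * m : ℝ)) := by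
  have hF : 𝓕 (fun τ : ℝ => (G k τ : ℂ)) = Ga k := by
    ext w
    rw [Real.fourier_real_eq_integral_exp_smul, Ga, ← G_gamma]
    congr 1; ext τ
    rw [smul_eq_mul, mul_comm]
    congr 2; push_cast; ring
  have := congrFun (Continuous.fourierInv_fourier_eq (f := fun τ : ℝ => (G k τ : ℂ))
    (Complex.continuous_ofReal.comp (G_cont k hk)) (G_int k).ofReal (by rw [hF]; exact Ga_int k hk)) m
  rw [← this, hF, Real.fourierInv_eq]
  congr 1; ext w
  rw [Circle.smul_def, Real.fourierChar_apply, smul_eq_mul, mul_comm]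
  simp only [RCLike.inner_apply, conj_trivial]
  congr 2; push_cast; ring
end CV

namespace CV

def kk : Fin 6 → ℕ := ![1,3,1,2,2,1]
def jj : Fin 6 → ℕ := ![2,2,1,1,2,0]
def co (t ħ : ℝ) : Fin 6 → ℂ := ![((1/2 - ħ/2 + t*(1-t)*ħ^2/2 : ℝ):ℂ), ((1/2:ℝ):ℂ),
  ((ħ - 2*t*(1-t)*ħ^2 : ℝ):ℂ), Complex.I * (((2*t-1)*ħ:ℝ):ℂ), Complex.I * ((-((2*t-1)*ħ)/2:ℝ):ℂ),
  ((t*(1-t)*ħ^2:ℝ):ℂ)]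

def BS (i : Fin 6) (ω : ℝ × ℝ) : ℂ := Ga (kk i) ω.1 * (G (jj i) ω.2 : ℂ)

def cS (t ħ : ℝ) (ω : ℝ × ℝ) : ℂ := ∑ i, co t ħ i * BS i ω

def aS (t ħ : ℝ) (ω : ℝ × ℝ) : ℝ := 2 * Real.pi * ω.1 * t - ω.2 / ħ
def bS (t ħ : ℝ) (ω : ℝ × ℝ) : ℝ := 2 * Real.pi * ω.1 * (1 - t) + ω.2 / ħ

def C0 : ℝ := ∑ i, 3 * ∫ ω, ‖BS i ω‖

lemma kk_pos (i : Fin 6) : 1 ≤ kk i := by fin_cases i <;> simp [kk]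

lemma BS_int (i : Fin 6) : Integrable (BS i) :=
  (Ga_int (kk i) (kk_pos i)).mul_prod (G_int (jj i)).ofReal

lemma co_bd (t ħ : ℝ) (ht : t ∈ Set.Icc (0:ℝ) 1) (hh : ħ ∈ Set.Ioc (0:ℝ) 1) (i : Fin 6) :
    ‖co t ħ i‖ ≤ 3 := by
  obtain ⟨h0, h1⟩ := ht
  obtain ⟨g0, g1⟩ := hh
  have e1 : 0 ≤ t * (1 - t) := mul_nonneg h0 (by linarith)
  have e2 : t * (1 - t) ≤ 1 := by nlinarith
  have e3 : 0 ≤ ħ ^ 2 := by positivity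
  have e4 : ħ ^ 2 ≤ 1 := by nlinarith
  have e5 : 0 ≤ t * (1 - t) * ħ^2 := mul_nonneg e1 e3
  have e6 : t * (1 - t) * ħ^2 ≤ 1 := mul_le_one₀ e2 e3 e4
  have e7 : |(2*t-1)*ħ| ≤ 1 := by
    rw [abs_mul]; apply mul_le_one₀ _ (abs_nonneg _) _ <;> rw [abs_le] <;> constructor <;> linarith
  rw [abs_le] at e7
  fin_cases i <;> simp only [co, Matrix.cons_val, Fin.mk_one, Fin.isValue, Fin.zero_eta, Fin.reduceFinMk] <;> (try rw [norm_mul Complex.I, Complex.norm_I, one_mul]) <;> rw [Complex.norm_real, Real.norm_eq_abs, abs_le] <;> constructor <;> nlinarith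

lemma cS_int (t ħ : ℝ) : Integrable (cS t ħ) := by
  unfold cS
  exact integrable_finsetSum _ fun i _ => (BS_int i).const_mul _

lemma cS_bd (t ħ : ℝ) (ht : t ∈ Set.Icc (0:ℝ) 1) (hh : ħ ∈ Set.Ioc (0:ℝ) 1) :
    ∫ ω, ‖cS t ħ ω‖ ≤ C0 := by
  unfold C0
  have : ∀ ω, ‖cS t ħ ω‖ ≤ ∑ i, 3 * ‖BS i ω‖ := by
    intro ω
    refine (norm_sum_le _ _).trans (Finset.sum_le_sum fun i _ => ?_)
    rw [norm_mul]
    exact mul_le_mul_of_nonneg_right (co_bd t ħ ht hh i) (norm_nonneg _)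
  have hi : ∀ i ∈ Finset.univ, Integrable (fun ω => 3 * ‖BS i ω‖) := fun i _ => (BS_int i).norm.const_mul _
  refine (integral_mono (cS_int t ħ).norm (integrable_finsetSum _ hi) this).trans ?_
  rw [integral_finsetSum _ hi]
  simp_rw [integral_const_mul]
  exact le_rfl

lemma C0_nonneg : 0 ≤ C0 := by
  unfold C0
  exact Finset.sum_nonneg fun i _ => mul_nonneg (by norm_num) (integral_nonneg fun _ => norm_nonneg _)

lemma BS_exp (t ħ : ℝ) (i : Fin 6) (x y : ℝ) :
    ∫ ω, BS i ω * Complex.exp (Complex.I * (aS t ħ ω * x + bS t ħ ω * y : ℝ)) =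
      (G (kk i) (t * x + (1 - t) * y) : ℂ) * ((jj i).factorial /
        (1 + Complex.I * ((x - y) / ħ : ℝ)) ^ (jj i + 1)) := by
  rw [← G_gamma, G_inv _ (kk_pos i), ← integral_prod_mul]
  rw [← Measure.volume_eq_prod]
  congr 1; ext ω
  unfold BS aS bS
  rw [mul_mul_mul_comm, ← Complex.exp_add]
  congr 2; push_cast; ring

lemma BSe_int (t ħ : ℝ) (i : Fin 6) (x y : ℝ) : 
    Integrable (fun ω => BS i ω * Complex.exp (Complex.I * (aS t ħ ω * x + bS t ħ ω * y : ℝ))) := by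
  refine (BS_int i).mul_bdd (c := 1) ?_ ?_
  · unfold aS bS; fun_prop
  · refine Filter.Eventually.of_forall fun τ => ?_
    rw [Complex.norm_exp]; simp

lemma one_add_I_ne (x : ℝ) : (1 + Complex.I * x : ℂ) ≠ 0 := by
  intro h; have := congrArg Complex.re h; simp at this

lemma one_sub_I_ne (x : ℝ) : (1 - Complex.I * x : ℂ) ≠ 0 := by
  intro h; have := congrArg Complex.re h; simp at this

lemma sepS (t ħ : ℝ) (hh : ħ ≠ 0) (x y : ℝ) :
    (G 1 (t * x + (1 - t) * y) : ℂ) / (1 + Complex.I * ((x - y) / ħ : ℝ)) ^ 3 =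
    1 / ((1 + Complex.I * x) * (1 - Complex.I * y)) *
      ∫ ω, cS t ħ ω * Complex.exp (Complex.I * (aS t ħ ω * x + bS t ħ ω * y : ℝ)) := by
  have e : ∫ ω, cS t ħ ω * Complex.exp (Complex.I * (aS t ħ ω * x + bS t ħ ω * y : ℝ)) =
     ∑ i, co t ħ i * ((G (kk i) (t * x + (1 - t) * y) : ℂ) * ((jj i).factorial /
        (1 + Complex.I * ((x - y) / ħ : ℝ)) ^ (jj i + 1))) := by
    simp_rw [← BS_exp, cS, Finset.sum_mul, mul_assoc]
    rw [integral_finsetSum _ fun i _ => (BSe_int t ħ i x y).const_mul _]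
    simp_rw [integral_const_mul]
  rw [e]
  have hx := one_add_I_ne x
  have hy := one_sub_I_ne y
  have hz := one_add_I_ne ((x - y) / ħ)
  have hhc : (ħ : ℂ) ≠ 0 := by exact_mod_cast hh
  have hG2 := G_succ 1 1 (t * x + (1 - t) * y)
  have hG3 := G_succ 1 2 (t * x + (1 - t) * y)
  simp only [Nat.reduceAdd] at hG2 hG3
  simp only [Fin.sum_univ_six, kk, jj, co, Matrix.cons_val, Fin.isValue, ← hG2, ← hG3, Nat.factorial]
  set g := G 1 (t * x + (1 - t) * y)
  have hI : Complex.I ^ 2 = -1 := Complex.I_sq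
  set z : ℂ := 1 + Complex.I * ((x - y) / ħ : ℝ) with hzd
  have hxy : (y : ℂ) = x + Complex.I * (z - 1) * ħ := by
    rw [hzd]; push_cast; field_simp; linear_combination ((y:ℂ) - x) * hI
  push_cast
  rw [one_div, inv_mul_eq_div, div_eq_div_iff (pow_ne_zero _ hz) (mul_ne_zero hx hy)]
  field_simp
  rw [hxy]
  ring_nf
  simp only [show Complex.I^3 = -Complex.I by rw [pow_succ, hI]; ring, show Complex.I^4 = 1 by rw [show 4 = 2*2 by norm_num, pow_mul, hI]; norm_num, hI]
  ring
end CV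

namespace CV

variable {E : Type*} [NormedAddCommGroup E] [NormedSpace ℝ E]

def Cc (h : E → ℂ) : Prop := ContDiff ℝ (⊤ : ℕ∞) h ∧ HasCompactSupport h

lemma dirD_smooth {h : E → ℂ} (hh : ContDiff ℝ (⊤ : ℕ∞) h) (v : E) :
    ContDiff ℝ (⊤ : ℕ∞) (dirD v h) := by
  unfold dirD
  exact (hh.fderiv_right (m := (⊤ : ℕ∞)) (by simp)).clm_apply contDiff_const

lemma Cc.dirD {h : E → ℂ} (hh : Cc h) (v : E) : Cc (dirD v h) := by
  refine ⟨dirD_smooth hh.1 v, ?_⟩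
  exact (hh.2.fderiv (𝕜 := ℝ)).comp_left (g := fun L : E →L[ℝ] ℂ => L v) (by simp)

def A (v : E) (ω : E → ℝ) (h : E → ℂ) : E → ℂ := fun x => h x + ω x * dirD v h x

lemma A_smooth {h : E → ℂ} (hh : ContDiff ℝ (⊤ : ℕ∞) h) (v : E) {ω : E → ℝ}
    (hω : ContDiff ℝ (⊤ : ℕ∞) ω) : ContDiff ℝ (⊤ : ℕ∞) (A v ω h) := by
  unfold A
  exact hh.add ((Complex.ofRealCLM.contDiff.comp hω).mul (dirD_smooth hh v))

lemma Cc.A {h : E → ℂ} (hh : Cc h) (v : E) {ω : E → ℝ}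
    (hω : ContDiff ℝ (⊤ : ℕ∞) ω) : Cc (A v ω h) := by
  refine ⟨A_smooth hh.1 v hω, ?_⟩
  exact hh.2.add ((hh.dirD v).2.mul_left)

lemma Cc.bdd {h : E → ℂ} (hh : Cc h) : ∃ C, ∀ x, ‖h x‖ ≤ C :=
  hh.2.exists_bound_of_continuous hh.1.continuous

lemma dirD_line {h : E → ℂ} (hh : ContDiff ℝ (⊤ : ℕ∞) h) (x v : E) (c τ : ℝ) :
    HasDerivAt (fun τ : ℝ => h (x - (τ * c) • v)) (- (c * dirD v h (x - (τ * c) • v))) τ := by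
  have h1 : HasDerivAt (fun τ : ℝ => x - (τ * c) • v) (-(c • v)) τ := by
    have := (((hasDerivAt_id τ).mul_const c).smul_const v).const_sub x
    simpa using this
  have h2 := ((hh.differentiable (by simp)) (x - (τ * c) • v)).hasFDerivAt.comp_hasDerivAt τ h1
  refine h2.congr_deriv ?_
  simp [dirD]

lemma tend2 (k : ℕ) {φ : ℝ → ℂ} {C : ℝ} (hC : ∀ x, ‖φ x‖ ≤ C) :
    Filter.Tendsto (fun τ : ℝ => ((τ ^ k * Real.exp (-τ) : ℝ) : ℂ) * φ τ) Filter.atTop (nhds 0) := by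
  have h1 := (Real.tendsto_pow_mul_exp_neg_atTop_nhds_zero k)
  have h2 : Filter.Tendsto (fun τ : ℝ => ((τ ^ k * Real.exp (-τ) : ℝ) : ℂ)) Filter.atTop (nhds 0) := by
    exact_mod_cast (Complex.continuous_ofReal.tendsto 0).comp h1
  exact h2.zero_mul_isBoundedUnder_le ⟨C, by simp; exact ⟨0, fun b _ => hC b⟩⟩

lemma T_one {h : E → ℂ} (hh : Cc h) (v : E) {ω : E → ℝ} (hω : ContDiff ℝ (⊤ : ℕ∞) ω)
    (hinv : ∀ x (s : ℝ), ω (x - s • v) = ω x) (x : E) :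
    h x = ∫ τ : ℝ, (G 1 τ : ℂ) * (A v ω (A v ω h)) (x - (τ * ω x) • v) := by
  have hA := hh.A v hω
  have hAA := hA.A v hω
  set g := A v ω h with hg
  obtain ⟨C1, hC1⟩ := hh.bdd
  obtain ⟨C2, hC2⟩ := hA.bdd
  obtain ⟨C3, hC3⟩ := hAA.bdd
  set P : ℝ → ℂ := fun τ => ((τ ^ 1 * Real.exp (-τ) : ℝ) : ℂ) * (-g (x - (τ * ω x) • v)) -
    ((τ ^ 0 * Real.exp (-τ) : ℝ) : ℂ) * h (x - (τ * ω x) • v) with hP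
  have hd : ∀ τ, HasDerivAt P (((τ ^ 1 * Real.exp (-τ) : ℝ) : ℂ) * A v ω g (x - (τ * ω x) • v)) τ := by
    intro τ
    have hp : ∀ k : ℕ, HasDerivAt (fun τ : ℝ => τ ^ k * Real.exp (-τ))
      (k * τ ^ (k-1) * Real.exp (-τ) + τ ^ k * (Real.exp (-τ) * (-1))) τ := fun k =>
      (hasDerivAt_pow k τ).mul ((hasDerivAt_neg τ).exp)
    have h1 := ((hp 1).ofReal_comp.mul (dirD_line hA.1 x v (ω x) τ).neg).sub
      ((hp 0).ofReal_comp.mul (dirD_line hh.1 x v (ω x) τ))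
    refine h1.congr_deriv ?_
    have e1 : g (x - (τ * ω x) • v) = h (x - (τ * ω x) • v) + ω x * dirD v h (x - (τ * ω x) • v) := by
      rw [hg, A, hinv]
    have e2 : A v ω g (x - (τ * ω x) • v) = g (x - (τ * ω x) • v) + ω x * dirD v g (x - (τ * ω x) • v) := by
      rw [A, hinv]
    rw [e2]; push_cast; simp [e1]; ring
  have hc : Continuous fun τ : ℝ => A v ω g (x - (τ * ω x) • v) := by
    have := hAA.1.continuous
    fun_prop
  have hint : Integrable (fun τ : ℝ => (G 1 τ : ℂ) * A v ω g (x - (τ * ω x) • v)) :=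
    (G_int 1).ofReal.mul_bdd (c := C3) hc.aestronglyMeasurable (Filter.Eventually.of_forall fun τ => hC3 _)
  have hind : (fun τ : ℝ => (G 1 τ : ℂ) * A v ω g (x - (τ * ω x) • v)) = (Set.Ioi (0:ℝ)).indicator
     (fun τ => ((τ ^ 1 * Real.exp (-τ) : ℝ) : ℂ) * A v ω g (x - (τ * ω x) • v)) := by
    ext τ
    simp only [G, Set.indicator_apply, Set.mem_Ioi]
    split_ifs <;> simp
  rw [hind, integrable_indicator_iff measurableSet_Ioi] at hint
  rw [hind, integral_indicator measurableSet_Ioi,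
    integral_Ioi_of_hasDerivAt_of_tendsto' (a := 0) (m := 0 - 0) (fun τ _ => hd τ) hint ?_]
  · simp [hP]
  · exact (tend2 1 (φ := fun τ => -g (x - (τ * ω x) • v)) (C := C2) (fun τ => by rw [norm_neg]; exact hC2 _)).sub
      (tend2 0 (φ := fun τ => h (x - (τ * ω x) • v)) (C := C1) (fun τ => hC1 _))

/-- iterated T -/
lemma T_fold (B : E → ℂ) (hB : Continuous B) (C : ℝ) (hC : ∀ x, ‖B x‖ ≤ C) (ω : E → ℝ) :
    ∀ (d : ℕ) (v : Fin d → E), (∀ i x (s : ℝ), ω (x - s • v i) = ω x) → ∀ x,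
    (List.finRange d).foldr (fun j H y => ∫ τ : ℝ, (G 1 τ : ℂ) * H (y - (τ * ω y) • v j)) B x =
    ∫ τ : Fin d → ℝ, ((∏ j, G 1 (τ j) : ℝ) : ℂ) * B (x - ∑ j, (τ j * ω x) • v j) := by
  intro d
  induction d with
  | zero =>
    intro v hv x
    simp [Measure.real, Measure.volume_pi_eq_dirac (0 : Fin 0 → ℝ)]
  | succ d ih =>
    intro v hv x
    rw [List.finRange_succ, List.foldr_cons, List.foldr_map]
    have := ih (fun j => v j.succ) (fun i => hv i.succ)
    simp_rw [this]
    rw [← (volume_preserving_piFinSuccAbove (fun _ => ℝ) 0).symm.integral_comp']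
    have hG : Integrable fun τ : ℝ × (Fin d → ℝ) => ((G 1 τ.1 : ℂ)) * ((∏ j, G 1 (τ.2 j) : ℝ) : ℂ) :=
      (G_int 1).ofReal.mul_prod (Integrable.ofReal (Integrable.fintype_prod (f := fun _ => G 1) (fun _ => G_int 1)))
    have hI : Integrable fun τ : ℝ × (Fin d → ℝ) => ((G 1 τ.1 : ℂ)) * ((∏ j, G 1 (τ.2 j) : ℝ) : ℂ) *
        B (x - (τ.1 * ω x) • v 0 - ∑ j, (τ.2 j * ω x) • v j.succ) := by
      refine hG.mul_bdd (c := C) ?_ (Filter.Eventually.of_forall fun _ => hC _)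
      apply Continuous.aestronglyMeasurable
      fun_prop
    rw [Measure.volume_eq_prod] at hI ⊢
    simp_rw [← integral_const_mul, hv, ← mul_assoc]
    rw [← integral_prod _ hI]
    congr 1; ext τ
    simp only [MeasurableEquiv.piFinSuccAbove_symm_apply, Fin.insertNthEquiv, Equiv.coe_fn_mk, Fin.prod_univ_succ, Fin.sum_univ_succ, Fin.insertNth_zero', Fin.cons_zero, Fin.cons_succ]
    push_cast
    rw [sub_sub]
end CV

namespace CV

variable {d : ℕ}

def ev (d : ℕ) : Option (Fin d) → Q d
  | none => eR d
  | some i => eTh d i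

def crd (q : Q d) : Option (Fin d) → ℝ
  | none => q.1
  | some i => q.2 i

def Fj (f : ℝ → ℝ) (r : ℝ) : Option (Fin d) → ℝ
  | none => 1
  | some _ => f r

abbrev Lt (d : ℕ) := Bool × Option (Fin d)

def vec : Lt d → Q d × Q d
  | (false, j) => (ev d j, 0)
  | (true, j) => (0, ev d j)

def om (f : ℝ → ℝ) : Lt d → Q d × Q d → ℝ
  | (false, j) => fun x => (Fj f x.1.1 j)⁻¹
  | (true, j) => fun x => -(Fj f x.1.1 j)

def Aop (f : ℝ → ℝ) (c : Lt d) : (Q d × Q d → ℂ) → (Q d × Q d → ℂ) := A (vec c) (om f c)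

def word (f : ℝ → ℝ) (l : List (Lt d)) (h : Q d × Q d → ℂ) : Q d × Q d → ℂ := l.foldr (Aop f) h

def isR (c : Lt d) : Prop := c = (false, none)

lemma vec_r (c : Lt d) (hc : c ≠ (false, none)) : (vec c).1.1 = 0 := by
  rcases c with ⟨_|_, _|i⟩ <;> simp_all [vec, ev, eR, eTh]

lemma om_inv (f : ℝ → ℝ) (c c' : Lt d) (hc : c ≠ (false, none)) (x : Q d × Q d) (s : ℝ) :
    om f c' (x - s • vec c) = om f c' x := by
  have : (x - s • vec c).1.1 = x.1.1 := by simp [vec_r c hc]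
  rcases c' with ⟨_|_, _|i⟩ <;> simp [om, Fj, vec_r c hc]

lemma om_one (f : ℝ → ℝ) (x : Q d × Q d) : om f (false, none) x = 1 := by simp [om, Fj]

lemma om_smooth (f : ℝ → ℝ) (hf : ContDiff ℝ (⊤ : ℕ∞) f) (h1 : ∀ r, 1 ≤ f r) (c : Lt d) :
    ContDiff ℝ (⊤ : ℕ∞) (om f c) := by
  have h0 : ∀ r, f r ≠ 0 := fun r => by linarith [h1 r]
  rcases c with ⟨_|_, _|i⟩ <;> simp only [om, Fj]
  · exact contDiff_const
  · exact (hf.comp (contDiff_fst.comp contDiff_fst)).inv (fun x => h0 _)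
  · exact contDiff_const
  · exact (hf.comp (contDiff_fst.comp contDiff_fst)).neg

lemma word_Cc (f : ℝ → ℝ) (hf : ContDiff ℝ (⊤ : ℕ∞) f) (h1 : ∀ r, 1 ≤ f r) (l : List (Lt d))
    {h : Q d × Q d → ℂ} (hh : Cc h) : Cc (word f l h) := by
  induction l with
  | nil => exact hh
  | cons c l ih => exact Cc.A ih _ (om_smooth f hf h1 c)

lemma word_append (f : ℝ → ℝ) (l l' : List (Lt d)) (h : Q d × Q d → ℂ) :
    word f (l ++ l') h = word f l (word f l' h) := List.foldr_append

def AAth (f : ℝ → ℝ) (h : Q d × Q d → ℂ) (i : Fin d) : Q d × Q d → ℂ :=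
  Aop f (false, some i) (Aop f (false, some i) h)

lemma foldl_word (f : ℝ → ℝ) (L : List (Fin d)) : ∃ l : List (Lt d), l.length = 2 * L.length ∧
    (∀ c ∈ l, c ≠ (false, none)) ∧ ∀ h, L.foldl (AAth f) h = word f l h := by
  induction L with
  | nil => exact ⟨[], by simp, by simp, fun h => rfl⟩
  | cons j L ih =>
    obtain ⟨l, h1, h2, h3⟩ := ih
    refine ⟨l ++ [(false, some j), (false, some j)], by simp [h1]; ring, ?_, ?_⟩
    · intro c hc
      simp only [List.mem_append, List.mem_cons] at hc
      rcases hc with hc | hc | hc | hc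
      · exact h2 c hc
      · simp [hc]
      · simp [hc]
      · simp at hc
    · intro h
      rw [List.foldl_cons, h3, word_append]; rfl

def omt (f : ℝ → ℝ) (x : Q d × Q d) : ℝ := (f x.1.1)⁻¹

lemma T_list (f : ℝ → ℝ) (hf : ContDiff ℝ (⊤ : ℕ∞) f) (h1 : ∀ r, 1 ≤ f r) (L : List (Fin d)) :
    ∀ h : Q d × Q d → ℂ, Cc h →
    L.foldr (fun j H y => ∫ τ : ℝ, (G 1 τ : ℂ) * H (y - (τ * omt f y) • vec (false, some j)))
      (L.foldl (AAth f) h) = h := by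
  induction L with
  | nil => intro h hh; rfl
  | cons j L ih =>
    intro h hh
    rw [List.foldl_cons, List.foldr_cons, ih]
    · ext x
      exact (T_one hh _ (om_smooth f hf h1 (false, some j)) (fun x s => om_inv f _ _ (by simp) x s) x).symm
    · exact (hh.A _ (om_smooth f hf h1 _)).A _ (om_smooth f hf h1 _)

def Kg (f : ℝ → ℝ) (z m : Q d) : ℝ := (f z.1) ^ d * ∏ j, G 1 (Fj f z.1 j * (crd m j - crd z j))

def bq (f : ℝ → ℝ) (a : Q d × Q d → ℂ) : Q d × Q d → ℂ :=
  (List.finRange d).foldl (AAth f) (word f [(false, none), (false, none)] a)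

lemma bq_word (f : ℝ → ℝ) : ∃ l : List (Lt d), l.length = 2 * d ∧
    (∀ c ∈ l, c ≠ (false, none)) ∧ ∀ a, bq f a = word f l (word f [(false, none), (false, none)] a) := by
  obtain ⟨l, h1, h2, h3⟩ := foldl_word f (List.finRange d)
  exact ⟨l, by simpa using h1, h2, fun a => h3 _⟩

lemma bq_Cc (f : ℝ → ℝ) (hf : ContDiff ℝ (⊤ : ℕ∞) f) (h1 : ∀ r, 1 ≤ f r)
    {a : Q d × Q d → ℂ} (ha : Cc a) : Cc (bq f a) := by
  obtain ⟨l, -, -, h⟩ := bq_word (d := d) f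
  rw [h]
  exact word_Cc f hf h1 _ (word_Cc f hf h1 _ ha)

lemma Kg_cont (f : ℝ → ℝ) (hf : Continuous f) : Continuous fun x : Q d × Q d => Kg f x.1 x.2 := by
  unfold Kg
  have := G_cont 1 le_rfl
  refine Continuous.mul (by fun_prop) (continuous_finsetProd _ fun j _ => this.comp ?_)
  rcases j with _ | i <;> simp only [Fj, crd] <;> fun_prop

lemma cc_slice {X Y : Type*} [TopologicalSpace X] [T2Space X] [TopologicalSpace Y] [T2Space Y] {h : X × Y → ℂ}
    (hh : HasCompactSupport h) (p : Y) : HasCompactSupport (fun z => h (z, p)) := by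
  refine HasCompactSupport.intro (hh.isCompact.image continuous_fst) (fun z hz => ?_)
  by_contra h0
  exact hz ⟨(z, p), subset_tsupport _ h0, rfl⟩

lemma cc_slice' {X Y : Type*} [TopologicalSpace X] [T2Space X] [TopologicalSpace Y] [T2Space Y] {h : X × Y → ℂ}
    (hh : HasCompactSupport h) (z : X) : HasCompactSupport (fun p => h (z, p)) := by
  refine HasCompactSupport.intro (hh.isCompact.image continuous_snd) (fun p hz => ?_)
  by_contra h0
  exact hz ⟨(z, p), subset_tsupport _ h0, rfl⟩

lemma m_step (f : ℝ → ℝ) (hf : ContDiff ℝ (⊤ : ℕ∞) f) (h1 : ∀ r, 1 ≤ f r)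
    {a : Q d × Q d → ℂ} (ha : Cc a) (m p : Q d) :
    a (m, p) = ∫ z : Q d, (Kg f z m : ℂ) * bq f a (z, p) := by
  have hb := bq_Cc f hf h1 ha
  have hbc := hb.1.continuous
  obtain ⟨C, hC⟩ := hb.bdd
  have hKc := Kg_cont (d := d) f hf.continuous
  have hint : Integrable (fun z : Q d => (Kg f z m : ℂ) * bq f a (z, p)) := by
    apply Continuous.integrable_of_hasCompactSupport
    · have : Continuous fun z : Q d => Kg f z m := hKc.comp (by fun_prop : Continuous fun z : Q d => (z, m))
      fun_prop
    · exact (cc_slice hb.2 p).mul_left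
  have e1 : a (m, p) = ∫ τ : ℝ, (G 1 τ : ℂ) * word f [(false, none), (false, none)] a ((m, p) - (τ * 1) • vec (false, none)) := by
    have := T_one ha (vec (false, none)) (om_smooth f hf h1 (false, none)) (fun x s => by simp [om_one]) (m, p)
    rw [om_one] at this
    exact this
  have hw : Cc (word f [(false, none), (false, none)] a) := word_Cc f hf h1 _ ha
  have e2 : ∀ x, word f [(false, none), (false, none)] a x = ∫ τ : Fin d → ℝ, ((∏ j, G 1 (τ j) : ℝ) : ℂ) *
      bq f a (x - ∑ j, (τ j * omt f x) • vec (false, some j)) := by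
    intro x
    have h3 := congrFun (T_list f hf h1 (List.finRange d) _ hw) x
    rw [← h3]
    refine T_fold (bq f a) hbc C hC (omt f) d (fun j => vec (false, some j)) ?_ x
    intro i x s
    simp [omt, vec_r]
  rw [e1, Measure.volume_eq_prod, integral_prod _ hint]
  symm
  rw [← integral_sub_left_eq_self (μ := volume) _ m.1]
  congr 1; ext τ
  symm
  rw [e2]
  set c := f (m.1 - τ) with hc
  have hcpos : 0 < c := by linarith [h1 (m.1 - τ)]
  have ho : omt f ((m, p) - (τ * 1) • (vec (false, none) : Q d × Q d)) = c⁻¹ := by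
    simp [omt, vec, ev, eR, hc]
  rw [ho, ← integral_const_mul]
  have h4 := Measure.integral_comp_smul (volume : Measure (Fin d → ℝ)) (fun σ : Fin d → ℝ => (G 1 τ : ℂ) * (((∏ j, G 1 (σ j) : ℝ) : ℂ) *
      bq f a ((m, p) - (τ * 1) • vec (false, none) - ∑ j, (σ j * c⁻¹) • vec (false, some j)))) c
  symm
  rw [← integral_sub_left_eq_self (μ := volume) _ m.2]
  symm
  simp only [Module.finrank_fintype_fun_eq_card, Fintype.card_fin] at h4
  rw [abs_of_pos (by positivity)] at h4
  rw [eq_inv_smul_iff₀ (by positivity)] at h4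
  rw [← h4, ← integral_smul]
  congr 1; ext σ
  have hx : ((m, p) - (τ * 1) • (vec (false, none) : Q d × Q d) - ∑ j, ((c • σ) j * c⁻¹) • vec (false, some j)) =
     ((m.1 - τ, m.2 - σ), p) := by
    have : ∀ j, (c • σ) j * c⁻¹ = σ j := fun j => by simp; field_simp
    simp_rw [this]
    ext j
    · simp [vec, ev, eR, eTh, Prod.fst_sum]
    · simp [vec, ev, eR, eTh, Prod.fst_sum, Prod.snd_sum, Finset.sum_apply, Pi.single_apply]
    · simp [vec, ev, eR, eTh, Prod.fst_sum, Prod.snd_sum]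
    · simp [vec, ev, eR, eTh, Prod.fst_sum, Prod.snd_sum]
  rw [hx]
  simp only [Kg, Fintype.prod_option, Fj, crd, ← hc]
  simp only [one_mul, sub_sub_cancel, Pi.sub_apply, Pi.smul_apply, smul_eq_mul, Complex.real_smul]
  push_cast
  ring
end CV

namespace CV

variable {d : ℕ}

lemma ephase_norm (ħ : ℝ) (p s : Q d) : ‖ephase ħ p s‖ = 1 := by
  unfold ephase
  rw [mul_div_assoc, ← Complex.ofReal_div, mul_comm, Complex.norm_exp_ofReal_mul_I]

lemma ephase_cont (ħ : ℝ) : Continuous fun x : Q d × Q d => ephase ħ x.1 x.2 := by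
  unfold ephase qdot
  fun_prop

lemma qdot_ev (s : Q d) (j : Option (Fin d)) : qdot (ev d j) s = crd s j := by
  rcases j with _ | i <;> simp [qdot, ev, eR, eTh, crd, Pi.single_apply]

lemma qdot_add (p p' s : Q d) (c : ℝ) : qdot (p + c • p') s = qdot p s + c * qdot p' s := by
  simp only [qdot, Prod.fst_add, Prod.smul_fst, smul_eq_mul, Prod.snd_add, Prod.smul_snd, Pi.add_apply, Pi.smul_apply, add_mul,
    Finset.sum_add_distrib, mul_add, Finset.mul_sum, mul_assoc]
  ring

lemma ephase_line (ħ : ℝ) (p s : Q d) (j : Option (Fin d)) :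
    HasLineDerivAt ℝ (fun p => ephase ħ p s) (Complex.I * (crd s j / ħ : ℝ) * ephase ħ p s) p (ev d j) := by
  unfold HasLineDerivAt ephase
  simp_rw [qdot_add, qdot_ev]
  have h1 : HasDerivAt (fun t : ℝ => Complex.I * ((qdot p s + t * crd s j : ℝ) : ℂ) / ħ) (Complex.I * (crd s j : ℝ) / ħ) 0 := by
    have h2 : HasDerivAt (fun t : ℝ => qdot p s + t * crd s j) (crd s j) 0 := by
      simpa using ((hasDerivAt_id (0:ℝ)).mul_const (crd s j)).const_add (qdot p s)
    exact (h2.ofReal_comp.const_mul Complex.I).div_const (ħ : ℂ)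
  refine h1.cexp.congr_deriv ?_
  push_cast; simp; ring

lemma cc_int {h : Q d × Q d → ℂ} (hh : Cc h) (ħ : ℝ) (z s : Q d) :
    Integrable fun p : Q d => h (z, p) * ephase ħ p s := by
  apply Continuous.integrable_of_hasCompactSupport
  · have h1 := hh.1.continuous
    have h2 : Continuous fun p : Q d => ephase ħ p s := (ephase_cont ħ).comp (by fun_prop : Continuous fun p : Q d => (p, s))
    fun_prop
  · exact (cc_slice' hh.2 z).mul_right

lemma p_step1 (f : ℝ → ℝ) {h : Q d × Q d → ℂ} (hh : Cc h) (ħ : ℝ) (z s : Q d) (j : Option (Fin d)) :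
    ∫ p : Q d, Aop f (true, j) h (z, p) * ephase ħ p s =
     (1 + Complex.I * (Fj f z.1 j * crd s j / ħ : ℝ)) * ∫ p : Q d, h (z, p) * ephase ħ p s := by
  have hd := hh.dirD (vec (true, j))
  have hi1 := cc_int hh ħ z s
  have hi2 := cc_int hd ħ z s
  have key := integral_bilinear_hasLineDerivAt_right_eq_neg_left_of_integrable (μ := (volume : Measure (Q d)))
    (f := fun p => ephase ħ p s) (f' := fun p => Complex.I * (crd s j / ħ : ℝ) * ephase ħ p s)
    (g := fun p => h (z, p)) (g' := fun p => dirD (vec (true, j)) h (z, p)) (v := ev d j)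
    (B := ContinuousLinearMap.mul ℝ ℂ) ?_ ?_ ?_ (fun p _ => ephase_line ħ p s j) ?_
  · simp only [ContinuousLinearMap.mul_apply'] at key
    simp_rw [mul_assoc, integral_const_mul] at key
    simp only [Aop, A, om, add_mul]
    rw [integral_add hi1]
    · simp_rw [mul_assoc, integral_const_mul]
      simp_rw [mul_comm (dirD _ _ _) (ephase _ _ _), mul_comm (h _) (ephase _ _ _)]
      rw [key]; push_cast; ring
    · simp_rw [mul_assoc]; exact hi2.const_mul _
  · simp only [ContinuousLinearMap.mul_apply']
    refine (hi1.const_mul (Complex.I * (crd s j / ħ : ℝ))).congr (Filter.Eventually.of_forall fun p => ?_)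
    simp only; ring
  · simp only [ContinuousLinearMap.mul_apply']
    exact hi2.congr (Filter.Eventually.of_forall fun p => mul_comm _ _)
  · simp only [ContinuousLinearMap.mul_apply']
    exact hi1.congr (Filter.Eventually.of_forall fun p => mul_comm _ _)
  · intro p _
    have h1 := ((hh.1.differentiable (by simp)) (z, p)).hasFDerivAt.hasLineDerivAt (vec (true, j))
    unfold HasLineDerivAt at h1 ⊢
    refine h1.congr_of_eventuallyEq (Filter.Eventually.of_forall fun t => ?_)
    simp [vec]

def Lp (d : ℕ) : List (Lt d) := (univ : Finset (Option (Fin d))).toList.flatMap fun j => [(true, j), (true, j), (true, j)]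

lemma Lp_len : (Lp d).length = 3 * (d + 1) := by
  simp [Lp, List.length_flatMap]; ring

lemma Lp_mem (c : Lt d) (hc : c ∈ Lp d) : c ≠ (false, none) := by
  simp [Lp] at hc; rcases hc with ⟨j, h⟩; rcases c with ⟨a, b⟩; simp_all

lemma p_step (f : ℝ → ℝ) (hf : ContDiff ℝ (⊤ : ℕ∞) f) (h1 : ∀ r, 1 ≤ f r)
    {h : Q d × Q d → ℂ} (hh : Cc h) (ħ : ℝ) (z s : Q d) :
    ∫ p : Q d, word f (Lp d) h (z, p) * ephase ħ p s =
     (∏ j, (1 + Complex.I * (Fj f z.1 j * crd s j / ħ : ℝ)) ^ 3) * ∫ p : Q d, h (z, p) * ephase ħ p s := by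
  rw [← Finset.prod_map_toList]
  unfold Lp
  induction (univ : Finset (Option (Fin d))).toList with
  | nil => simp [word]
  | cons j L ih =>
    rw [List.flatMap_cons, word_append, List.map_cons, List.prod_cons]
    have hw := word_Cc f hf h1 (L.flatMap fun j => [(true, j), (true, j), (true, j)]) hh
    simp only [word, List.foldr_cons, List.foldr_nil] at ih hw ⊢
    have hs := om_smooth f hf h1 (true, j)
    rw [p_step1, p_step1, p_step1, ih]
    · ring
    · exact hw
    · exact hw.A _ hs
    · exact (hw.A _ hs).A _ hs

def bb (f : ℝ → ℝ) (a : Q d × Q d → ℂ) : Q d × Q d → ℂ := word f (Lp d) (bq f a)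

lemma main1 (f : ℝ → ℝ) (hf : ContDiff ℝ (⊤ : ℕ∞) f) (h1 : ∀ r, 1 ≤ f r)
    {a : Q d × Q d → ℂ} (ha : Cc a) (ħ : ℝ) (m s : Q d) :
    ∫ p : Q d, a (m, p) * ephase ħ p s = 
      ∫ z : Q d, ((f z.1) ^ d : ℝ) * (∏ j, ((G 1 (Fj f z.1 j * (crd m j - crd z j)) : ℂ) /
         (1 + Complex.I * (Fj f z.1 j * crd s j / ħ : ℝ)) ^ 3)) * ∫ p : Q d, bb f a (z, p) * ephase ħ p s := by
  have hb := bq_Cc f hf h1 ha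
  have hbc := hb.1.continuous
  have hKc := Kg_cont (d := d) f hf.continuous
  have he := ephase_cont (d := d) ħ
  simp_rw [m_step f hf h1 ha, ← integral_mul_const]
  rw [integral_integral_swap]
  · congr 1; ext z
    simp_rw [mul_assoc, integral_const_mul]
    rw [bb, p_step f hf h1 hb, Finset.prod_div_distrib, Kg]
    rw [div_mul_eq_mul_div, mul_div_assoc, mul_div_cancel_left₀]
    · push_cast; ring
    · exact Finset.prod_ne_zero_iff.2 fun j _ => pow_ne_zero _ (one_add_I_ne _)
  · apply Continuous.integrable_of_hasCompactSupport
    · have h1 : Continuous fun x : Q d × Q d => Kg f x.2 m := hKc.comp (by fun_prop : Continuous fun x : Q d × Q d => (x.2, m))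
      have h2 : Continuous fun x : Q d × Q d => ephase ħ x.1 s := he.comp (by fun_prop : Continuous fun x : Q d × Q d => (x.1, s))
      simp only [Function.uncurry_def]
      fun_prop
    · have : HasCompactSupport fun x : Q d × Q d => bq f a (x.2, x.1) :=
        hb.2.comp_homeomorph (Homeomorph.prodComm (Q d) (Q d))
      exact (this.mul_left).mul_right
end CV

namespace CV

variable {d : ℕ}

abbrev Om (d : ℕ) := Option (Fin d) → ℝ × ℝ
abbrev TT (d : ℕ) := (Q d × Q d) × Om d

def xx (f : ℝ → ℝ) (z q : Q d) (j : Option (Fin d)) : ℝ := Fj f z.1 j * (crd q j - crd z j)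
def Cw (t ħ : ℝ) (ω : Om d) : ℂ := ∏ j, cS t ħ (ω j)
def Ph (f : ℝ → ℝ) (t ħ : ℝ) (z : Q d) (ω : Om d) (q : Q d) : ℂ :=
  ∏ j, ((1 + Complex.I * xx f z q j)⁻¹ * Complex.exp (Complex.I * (aS t ħ (ω j) * xx f z q j : ℝ)))
def Ps (f : ℝ → ℝ) (t ħ : ℝ) (z : Q d) (ω : Om d) (q : Q d) : ℂ :=
  ∏ j, ((1 - Complex.I * xx f z q j)⁻¹ * Complex.exp (Complex.I * (bS t ħ (ω j) * xx f z q j : ℝ)))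

def BB (f : ℝ → ℝ) (t ħ : ℝ) (b : Q d × Q d → ℂ) (θ : TT d) : ℂ := (((f θ.1.1.1) ^ d : ℝ) * b θ.1) * Cw t ħ θ.2

def phi (f : ℝ → ℝ) (t ħ : ℝ) (θ : TT d) (q : Q d) : ℂ := Ph f t ħ θ.1.1 θ.2 q * ephase ħ θ.1.2 q
def psi (f : ℝ → ℝ) (t ħ : ℝ) (θ : TT d) (q : Q d) : ℂ := Ps f t ħ θ.1.1 θ.2 q * ephase ħ θ.1.2 (-q)

lemma xx_cont (f : ℝ → ℝ) (hf : Continuous f) (j : Option (Fin d)) :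
    Continuous fun x : Q d × Q d => xx f x.1 x.2 j := by
  unfold xx
  rcases j with _ | i <;> simp only [Fj, crd] <;> fun_prop

lemma phi_cont (f : ℝ → ℝ) (hf : Continuous f) (t ħ : ℝ) :
    Continuous fun x : TT d × Q d => phi f t ħ x.1 x.2 := by
  unfold phi Ph
  have h1 : ∀ j, Continuous fun x : TT d × Q d => xx f x.1.1.1 x.2 j := fun j =>
    (xx_cont f hf j).comp (by fun_prop : Continuous fun x : TT d × Q d => (x.1.1.1, x.2))
  have h2 : Continuous fun x : TT d × Q d => ephase ħ x.1.1.2 x.2 :=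
    (ephase_cont ħ).comp (by fun_prop : Continuous fun x : TT d × Q d => (x.1.1.2, x.2))
  refine Continuous.mul (continuous_finsetProd _ fun j _ => ?_) h2
  refine Continuous.mul (Continuous.inv₀ ?_ fun x => one_add_I_ne _) ?_
  · have := h1 j; fun_prop
  · have := h1 j; unfold aS; fun_prop

lemma psi_cont (f : ℝ → ℝ) (hf : Continuous f) (t ħ : ℝ) :
    Continuous fun x : TT d × Q d => psi f t ħ x.1 x.2 := by
  unfold psi Ps
  have h1 : ∀ j, Continuous fun x : TT d × Q d => xx f x.1.1.1 x.2 j := fun j =>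
    (xx_cont f hf j).comp (by fun_prop : Continuous fun x : TT d × Q d => (x.1.1.1, x.2))
  have h2 : Continuous fun x : TT d × Q d => ephase ħ x.1.1.2 (-x.2) :=
    (ephase_cont ħ).comp (by fun_prop : Continuous fun x : TT d × Q d => (x.1.1.2, -x.2))
  refine Continuous.mul (continuous_finsetProd _ fun j _ => ?_) h2
  refine Continuous.mul (Continuous.inv₀ ?_ fun x => one_sub_I_ne _) ?_
  · have := h1 j; fun_prop
  · have := h1 j; unfold bS; fun_prop

lemma nsq_add (x : ℝ) : ‖(1 + Complex.I * x : ℂ)‖ ^ 2 = 1 + x ^ 2 := by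
  rw [← Complex.normSq_eq_norm_sq, Complex.normSq_apply]; simp; ring

lemma nsq_sub (x : ℝ) : ‖(1 - Complex.I * x : ℂ)‖ ^ 2 = 1 + x ^ 2 := by
  rw [← Complex.normSq_eq_norm_sq, Complex.normSq_apply]; simp; ring

lemma norm_expI (x : ℝ) : ‖Complex.exp (Complex.I * x)‖ = 1 := by
  rw [mul_comm, Complex.norm_exp_ofReal_mul_I]

lemma Ph_sq (f : ℝ → ℝ) (t ħ : ℝ) (z : Q d) (ω : Om d) (q : Q d) :
    ‖Ph f t ħ z ω q‖ ^ 2 = ∏ j, (1 + xx f z q j ^ 2)⁻¹ := by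
  unfold Ph
  rw [norm_prod, ← Finset.prod_pow]
  congr 1; ext j
  rw [norm_mul, norm_expI, norm_inv, mul_one, inv_pow, nsq_add]

lemma Ps_sq (f : ℝ → ℝ) (t ħ : ℝ) (z : Q d) (ω : Om d) (q : Q d) :
    ‖Ps f t ħ z ω q‖ ^ 2 = ∏ j, (1 + xx f z q j ^ 2)⁻¹ := by
  unfold Ps
  rw [norm_prod, ← Finset.prod_pow]
  congr 1; ext j
  rw [norm_mul, norm_expI, norm_inv, mul_one, inv_pow, nsq_sub]

lemma prod_le1 (f : ℝ → ℝ) (z q : Q d) : ∏ j, (1 + xx f z q j ^ 2)⁻¹ ≤ 1 := by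
  refine Finset.prod_le_one (fun j _ => by positivity) (fun j _ => ?_)
  apply inv_le_one_of_one_le₀; nlinarith [sq_nonneg (xx f z q j)]

lemma Ph_le (f : ℝ → ℝ) (t ħ : ℝ) (z : Q d) (ω : Om d) (q : Q d) : ‖Ph f t ħ z ω q‖ ≤ 1 := by
  have := (Ph_sq f t ħ z ω q).le.trans (prod_le1 f z q)
  exact (pow_le_one_iff_of_nonneg (norm_nonneg _) (by norm_num)).1 this

lemma Ps_le (f : ℝ → ℝ) (t ħ : ℝ) (z : Q d) (ω : Om d) (q : Q d) : ‖Ps f t ħ z ω q‖ ≤ 1 := by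
  have := (Ps_sq f t ħ z ω q).le.trans (prod_le1 f z q)
  exact (pow_le_one_iff_of_nonneg (norm_nonneg _) (by norm_num)).1 this

lemma phi_le (f : ℝ → ℝ) (t ħ : ℝ) (θ : TT d) (q : Q d) : ‖phi f t ħ θ q‖ ≤ 1 := by
  rw [phi, norm_mul, ephase_norm, mul_one]; exact Ph_le ..

lemma psi_le (f : ℝ → ℝ) (t ħ : ℝ) (θ : TT d) (q : Q d) : ‖psi f t ħ θ q‖ ≤ 1 := by
  rw [psi, norm_mul, ephase_norm, mul_one]; exact Ps_le ..

lemma Cw_int (t ħ : ℝ) : Integrable (Cw (d := d) t ħ) := 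
  Integrable.fintype_prod (f := fun _ => cS t ħ) (fun _ => cS_int t ħ)

lemma BB_int (f : ℝ → ℝ) (hf : Continuous f) (t ħ : ℝ) {b : Q d × Q d → ℂ} (hb : Cc b) :
    Integrable (BB f t ħ b) := by
  unfold BB
  refine Integrable.mul_prod (f := fun x : Q d × Q d => (((f x.1.1) ^ d : ℝ) : ℂ) * b x) ?_ (Cw_int t ħ)
  apply Continuous.integrable_of_hasCompactSupport
  · have := hb.1.continuous; fun_prop
  · exact hb.2.mul_left

attribute [irreducible] phi psi BB

lemma prod_sep (f : ℝ → ℝ) (t ħ : ℝ) (hh : ħ ≠ 0) (z q q' : Q d) :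
    (∏ j, ((G 1 (Fj f z.1 j * (crd (t • q + (1 - t) • q') j - crd z j)) : ℂ) /
         (1 + Complex.I * (Fj f z.1 j * crd (q - q') j / ħ : ℝ)) ^ 3)) =
    ∫ ω : Om d, Cw t ħ ω * Ph f t ħ z ω q * Ps f t ħ z ω q' := by
  have h1 : ∀ ω : Om d, Cw t ħ ω * Ph f t ħ z ω q * Ps f t ħ z ω q' = ∏ j, (fun (w : ℝ × ℝ) => 1 / ((1 + Complex.I * xx f z q j) * (1 - Complex.I * xx f z q' j)) *
      (cS t ħ w * Complex.exp (Complex.I * (aS t ħ w * xx f z q j + bS t ħ w * xx f z q' j : ℝ)))) (ω j) := by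
    intro ω
    unfold Cw Ph Ps
    rw [← Finset.prod_mul_distrib, ← Finset.prod_mul_distrib]
    congr 1; ext j
    push_cast
    rw [mul_add, Complex.exp_add, one_div, mul_inv]; ring
  simp_rw [h1]
  rw [integral_fintype_prod_volume_eq_prod (E := fun _ => ℝ × ℝ) (f := fun j => (fun (w : ℝ × ℝ) => 1 / ((1 + Complex.I * xx f z q j) * (1 - Complex.I * xx f z q' j)) *
      (cS t ħ w * Complex.exp (Complex.I * (aS t ħ w * xx f z q j + bS t ħ w * xx f z q' j : ℝ)))))]
  congr 1; ext j
  rw [integral_const_mul, ← sepS t ħ hh]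
  have e1 : Fj f z.1 j * (crd (t • q + (1 - t) • q') j - crd z j) = t * xx f z q j + (1 - t) * xx f z q' j := by
    rcases j with _ | i <;> simp [crd, xx] <;> ring
  have e2 : Fj f z.1 j * crd (q - q') j / ħ = (xx f z q j - xx f z q' j) / ħ := by
    rcases j with _ | i <;> simp [crd, xx] <;> ring
  rw [e1, e2]

lemma ephase_sub (ħ : ℝ) (p q q' : Q d) : ephase ħ p (q - q') = ephase ħ p q * ephase ħ p (-q') := by
  unfold ephase
  rw [← Complex.exp_add]; congr 1
  have : qdot p (q - q') = qdot p q + qdot p (-q') := by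
    simp [qdot, mul_sub, Finset.sum_sub_distrib]; ring
  rw [this]; push_cast; ring

lemma BBpp_int (f : ℝ → ℝ) (hf : Continuous f) (t ħ : ℝ) {b : Q d × Q d → ℂ} (hb : Cc b) (q q' : Q d) :
    Integrable fun θ => BB f t ħ b θ * phi f t ħ θ q * psi f t ħ θ q' := by
  have h1 : Continuous fun θ => phi (d := d) f t ħ θ q := (phi_cont f hf t ħ).comp (by fun_prop : Continuous fun θ : TT d => (θ, q))
  have h2 : Continuous fun θ => psi (d := d) f t ħ θ q' := (psi_cont f hf t ħ).comp (by fun_prop : Continuous fun θ : TT d => (θ, q'))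
  exact ((BB_int f hf t ħ hb).mul_bdd (c := 1) h1.aestronglyMeasurable (Filter.Eventually.of_forall fun θ => phi_le ..)).mul_bdd (c := 1)
    h2.aestronglyMeasurable (Filter.Eventually.of_forall fun θ => psi_le ..)

lemma bb_Cc (f : ℝ → ℝ) (hf : ContDiff ℝ (⊤ : ℕ∞) f) (h1 : ∀ r, 1 ≤ f r)
    {a : Q d × Q d → ℂ} (ha : Cc a) : Cc (bb f a) := word_Cc f hf h1 _ (bq_Cc f hf h1 ha)

lemma main2 (f : ℝ → ℝ) (hf : ContDiff ℝ (⊤ : ℕ∞) f) (h1 : ∀ r, 1 ≤ f r)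
    {a : Q d × Q d → ℂ} (ha : Cc a) (t ħ : ℝ) (hh : ħ ≠ 0) (q q' : Q d) :
    ∫ p : Q d, a (t • q + (1 - t) • q', p) * ephase ħ p (q - q') = 
      ∫ θ, BB f t ħ (bb f a) θ * phi f t ħ θ q * psi f t ħ θ q' := by
  have hb := bb_Cc f hf h1 ha
  have hi := BBpp_int f hf.continuous t ħ hb q q'
  rw [main1 f hf h1 ha]
  have hi2 := Integrable.integral_prod_left (μ := (volume : Measure (Q d × Q d))) (ν := (volume : Measure (Om d))) hi
  have e1 := integral_prod (μ := (volume : Measure (Q d × Q d))) (ν := (volume : Measure (Om d))) _ hi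
  have e2 := integral_prod (μ := (volume : Measure (Q d))) (ν := (volume : Measure (Q d))) _ hi2
  refine Eq.trans ?_ (e1.trans e2).symm
  congr 1; ext z
  rw [prod_sep f t ħ hh, ← integral_const_mul]
  congr 1; ext p
  rw [ephase_sub, ← integral_const_mul, ← integral_mul_const]
  congr 1; ext ω
  simp only [BB, phi, psi]; ring

lemma main3 (f : ℝ → ℝ) (hf : ContDiff ℝ (⊤ : ℕ∞) f) (h1 : ∀ r, 1 ≤ f r)
    {a : Q d × Q d → ℂ} (ha : Cc a) (t ħ : ℝ) (hh : ħ ≠ 0) {u : Q d → ℂ} (hu : Continuous u) (hu2 : HasCompactSupport u) (q : Q d) :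
    Op ħ t a u q = ((2 * Real.pi * ħ) ^ (d + 1) : ℝ)⁻¹ •
      ∫ θ, BB f t ħ (bb f a) θ * phi f t ħ θ q * ∫ q', psi f t ħ θ q' * u q' := by
  unfold Op
  congr 1
  have hb := bb_Cc f hf h1 ha
  have he := ephase_cont (d := d) ħ
  have hac := ha.1.continuous
  rw [integral_integral_swap]
  · simp_rw [integral_mul_const, main2 f hf h1 ha t ħ hh, ← integral_mul_const, ← integral_const_mul]
    rw [integral_integral_swap]
    · simp_rw [mul_assoc]
    · have hui := hu.integrable_of_hasCompactSupport hu2 (μ := volume)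
      have hp : Integrable fun x : Q d × TT d => u x.1 * BB f t ħ (bb f a) x.2 := 
        hui.mul_prod (BB_int f hf.continuous t ħ hb)
      have c1 : Continuous fun x : Q d × TT d => phi f t ħ x.2 q * psi f t ħ x.2 x.1 :=
        ((phi_cont f hf.continuous t ħ).comp (by fun_prop : Continuous fun x : Q d × TT d => (x.2, q))).mul
        ((psi_cont f hf.continuous t ħ).comp (by fun_prop : Continuous fun x : Q d × TT d => (x.2, x.1)))
      refine (hp.mul_bdd (c := 1 * 1) c1.aestronglyMeasurable (Filter.Eventually.of_forall fun x => ?_)).congr (Filter.Eventually.of_forall fun x => ?_)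
      · rw [norm_mul]; exact mul_le_mul (phi_le ..) (psi_le ..) (norm_nonneg _) zero_le_one
      · simp only [Function.uncurry_def]; ring
  · apply Continuous.integrable_of_hasCompactSupport
    · have h2 : Continuous fun x : Q d × Q d => ephase ħ x.1 (q - x.2) := he.comp (by fun_prop : Continuous fun x : Q d × Q d => (x.1, q - x.2))
      simp only [Function.uncurry_def]
      fun_prop
    · refine HasCompactSupport.intro ((ha.2.isCompact.image continuous_snd).prod hu2.isCompact) (fun x hx => ?_)
      simp only [Function.uncurry_def]
      by_contra h0
      apply hx
      have h3 : a (t • q + (1 - t) • x.2, x.1) ≠ 0 := fun h => h0 (by simp [h])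
      have h4 : u x.2 ≠ 0 := fun h => h0 (by simp [h])
      exact ⟨⟨_, subset_tsupport _ h3, rfl⟩, subset_tsupport _ h4⟩
end CV

namespace CV

variable {d : ℕ}

lemma one_int (c : ℝ) (hc : 0 < c) (x : ℝ) : Integrable (fun y : ℝ => c * (1 + (c * (x - y)) ^ 2)⁻¹) := by
  have h := (integrable_inv_one_add_sq.comp_mul_left' hc.ne').comp_sub_left x
  exact h.const_mul c

lemma one_val (c : ℝ) (hc : 0 < c) (x : ℝ) : ∫ y : ℝ, c * (1 + (c * (x - y)) ^ 2)⁻¹ = Real.pi := by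
  rw [integral_const_mul, integral_sub_left_eq_self (fun y => (1 + (c * y) ^ 2)⁻¹) volume x]
  rw [Measure.integral_comp_mul_left (fun y => (1 + y ^ 2)⁻¹) c, integral_univ_inv_one_add_sq]
  rw [abs_of_pos (by positivity), smul_eq_mul]; field_simp

lemma lapl (f : ℝ → ℝ) (hf : Continuous f) (h1 : ∀ r, 1 ≤ f r) (q : Q d) :
    ∫⁻ z : Q d, ENNReal.ofReal (f z.1 ^ d * ∏ j, (1 + xx f z q j ^ 2)⁻¹) = ENNReal.ofReal (Real.pi ^ (d + 1)) := by
  have hm : Continuous fun z : Q d => f z.1 ^ d * ∏ j, (1 + xx f z q j ^ 2)⁻¹ := by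
    refine Continuous.mul (by fun_prop) (continuous_finsetProd _ fun j _ => ?_)
    have : Continuous fun z : Q d => xx f z q j := (xx_cont f hf j).comp (by fun_prop : Continuous fun z : Q d => (z, q))
    exact Continuous.inv₀ (by fun_prop) (fun z => by positivity)
  have e : ∀ (r : ℝ) (θ : Fin d → ℝ), f r ^ d * ∏ j, (1 + xx f ((r, θ) : Q d) q j ^ 2)⁻¹ = (1 * (1 + (1 * (q.1 - r)) ^ 2)⁻¹) *
      ∏ i, (fun y : ℝ => f r * (1 + (f r * (q.2 i - y)) ^ 2)⁻¹) (θ i) := by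
    intro r θ
    rw [Fintype.prod_option, Finset.prod_mul_distrib]
    simp only [xx, Fj, crd, Finset.prod_const, Finset.card_univ, Fintype.card_fin]
    ring
  rw [Measure.volume_eq_prod, lintegral_prod _ hm.measurable.ennreal_ofReal.aemeasurable]
  simp_rw [e]
  have hr : ∀ r, ∫⁻ θ : Fin d → ℝ, ENNReal.ofReal ((1 * (1 + (1 * (q.1 - r)) ^ 2)⁻¹) *
      ∏ i, (fun y : ℝ => f r * (1 + (f r * (q.2 i - y)) ^ 2)⁻¹) (θ i)) =
      ENNReal.ofReal (1 * (1 + (1 * (q.1 - r)) ^ 2)⁻¹) * ENNReal.ofReal (Real.pi ^ d) := by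
    intro r
    have hp : 0 < f r := by linarith [h1 r]
    simp_rw [ENNReal.ofReal_mul (show 0 ≤ 1 * (1 + (1 * (q.1 - r)) ^ 2)⁻¹ by positivity)]
    rw [lintegral_const_mul' _ _ ENNReal.ofReal_ne_top, ← ofReal_integral_eq_lintegral_ofReal]
    · rw [integral_fintype_prod_volume_eq_prod (E := fun _ => ℝ) (f := fun i => fun y : ℝ => f r * (1 + (f r * (q.2 i - y)) ^ 2)⁻¹)]
      simp_rw [one_val _ hp]; simp
    · exact Integrable.fintype_prod (f := fun i => fun y : ℝ => f r * (1 + (f r * (q.2 i - y)) ^ 2)⁻¹) (fun i => one_int _ hp _)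
    · exact Filter.Eventually.of_forall fun θ => Finset.prod_nonneg fun i _ => by positivity
  simp_rw [hr]
  rw [lintegral_mul_const' _ _ ENNReal.ofReal_ne_top, ← ofReal_integral_eq_lintegral_ofReal (one_int 1 one_pos _)
    (Filter.Eventually.of_forall fun θ => by positivity), one_val 1 one_pos, ← ENNReal.ofReal_mul Real.pi_pos.le, pow_succ']

lemma enorm_sq (x : ℂ) : ‖x‖ₑ ^ 2 = ENNReal.ofReal (‖x‖ ^ 2) := by
  rw [ENNReal.ofReal_pow (norm_nonneg _), ofReal_norm]

lemma bessel (f : ℝ → ℝ) (hf : Continuous f) (h1 : ∀ r, 1 ≤ f r) (v : Q d → ℂ) (hv : StronglyMeasurable v)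
    (hv1 : Integrable v) (hv2 : MemLp v 2) (c : ℝ) (hc : c ≠ 0) (Φ : Q d → Om d → Q d → ℂ)
    (hΦ : Continuous fun x : TT d × Q d => Φ x.1.1.1 x.1.2 x.2)
    (hsq : ∀ z ω q, ‖Φ z ω q‖ ^ 2 = ∏ j, (1 + xx f z q j ^ 2)⁻¹) (C : Om d → ℂ) (hC : AEStronglyMeasurable C) :
    ∫⁻ θ : TT d, (ENNReal.ofReal (f θ.1.1.1 ^ d) * ‖C θ.2‖ₑ) * 
      ‖∫ q, v q * Φ θ.1.1 θ.2 q * Complex.exp (Complex.I * (c * qdot θ.1.2 q : ℝ))‖ₑ ^ 2 =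
    (∫⁻ ω, ‖C ω‖ₑ) * (ENNReal.ofReal ((2 * Real.pi / |c|) ^ (d+1)) * (ENNReal.ofReal (Real.pi ^ (d + 1)) * ∫⁻ q, ‖v q‖ₑ ^ 2)) := by
  have hΦle : ∀ z ω q, ‖Φ z ω q‖ ≤ 1 := fun z ω q => by
    have := (hsq z ω q).le.trans (prod_le1 f z q)
    exact (pow_le_one_iff_of_nonneg (norm_nonneg _) (by norm_num)).1 this
  have hm0 : StronglyMeasurable fun x : TT d × Q d => v x.2 * Φ x.1.1.1 x.1.2 x.2 * Complex.exp (Complex.I * (c * qdot x.1.1.2 x.2 : ℝ)) := by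
    refine ((hv.comp_measurable measurable_snd).mul hΦ.stronglyMeasurable).mul (Continuous.stronglyMeasurable ?_)
    unfold qdot; fun_prop
  have hm1 : StronglyMeasurable fun θ : TT d => ∫ q, v q * Φ θ.1.1 θ.2 q * Complex.exp (Complex.I * (c * qdot θ.1.2 q : ℝ)) :=
    hm0.integral_prod_right'
  have hw : Measurable fun θ : TT d => ENNReal.ofReal (f θ.1.1.1 ^ d) := by
    have := hf.measurable; fun_prop
  have hm2 : AEMeasurable (fun θ : TT d => (ENNReal.ofReal (f θ.1.1.1 ^ d) * ‖C θ.2‖ₑ) * 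
      ‖∫ q, v q * Φ θ.1.1 θ.2 q * Complex.exp (Complex.I * (c * qdot θ.1.2 q : ℝ))‖ₑ ^ 2) (volume.prod volume) := by
    refine (hw.aemeasurable.mul ?_).mul (hm1.measurable.enorm.pow_const 2).aemeasurable
    exact hC.comp_snd.enorm
  rw [Measure.volume_eq_prod, lintegral_prod_symm _ hm2, ← lintegral_mul_const'' _ hC.enorm]
  congr 1; ext ω
  have hm3 : Measurable fun x : Q d × Q d => ENNReal.ofReal (f x.1.1 ^ d) *
      ‖∫ q, v q * Φ x.1 ω q * Complex.exp (Complex.I * (c * qdot x.2 q : ℝ))‖ₑ ^ 2 := by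
    have h4 := (hw.mul (hm1.measurable.enorm.pow_const 2)).comp (by fun_prop : Measurable fun x : Q d × Q d => (x, ω))
    exact h4
  have e1 : ∀ x : Q d × Q d, (ENNReal.ofReal (f x.1.1 ^ d) * ‖C ω‖ₑ) * 
      ‖∫ q, v q * Φ x.1 ω q * Complex.exp (Complex.I * (c * qdot x.2 q : ℝ))‖ₑ ^ 2 = ‖C ω‖ₑ * (ENNReal.ofReal (f x.1.1 ^ d) *
      ‖∫ q, v q * Φ x.1 ω q * Complex.exp (Complex.I * (c * qdot x.2 q : ℝ))‖ₑ ^ 2) := by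
    intro x; ring
  simp_rw [e1]
  rw [lintegral_const_mul _ hm3]
  congr 1
  rw [Measure.volume_eq_prod (Q d), lintegral_prod _ hm3.aemeasurable]
  have hΦc : ∀ z, Continuous fun q => Φ z ω q := fun z => hΦ.comp (by fun_prop : Continuous fun q : Q d => ((((z, (0 : Q d)), ω) : TT d), q))
  have hΦd : Continuous fun x : Q d × Q d => Φ x.1 ω x.2 := hΦ.comp (by fun_prop : Continuous fun x : Q d × Q d => ((((x.1, (0 : Q d)), ω) : TT d), x.2))
  have e2 : ∀ z : Q d, ∫⁻ p, ENNReal.ofReal (f z.1 ^ d) * 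
      ‖∫ q, v q * Φ z ω q * Complex.exp (Complex.I * (c * qdot p q : ℝ))‖ₑ ^ 2 = 
      ENNReal.ofReal ((2 * Real.pi / |c|) ^ (d+1)) * ∫⁻ q, ‖v q‖ₑ ^ 2 * ENNReal.ofReal (f z.1 ^ d * ∏ j, (1 + xx f z q j ^ 2)⁻¹) := by
    intro z
    have i1 : Integrable fun q => v q * Φ z ω q := hv1.mul_bdd (c := 1) (hΦc z).aestronglyMeasurable (Filter.Eventually.of_forall fun q => hΦle ..)
    have i2 : MemLp (fun q => v q * Φ z ω q) 2 := by
      refine hv2.of_le i1.aestronglyMeasurable (Filter.Eventually.of_forall fun q => ?_)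
      rw [norm_mul]; exact mul_le_of_le_one_right (norm_nonneg _) (hΦle ..)
    rw [lintegral_const_mul' _ _ ENNReal.ofReal_ne_top, plancherel_c _ i1 i2 c hc, mul_left_comm, ← lintegral_const_mul' _ _ ENNReal.ofReal_ne_top]
    congr 1
    congr 1; ext q
    have hfn : 0 ≤ f z.1 ^ d := pow_nonneg (by linarith [h1 z.1]) _
    rw [enorm_mul, mul_pow, enorm_sq (Φ z ω q), hsq, ENNReal.ofReal_mul hfn]; ring
  simp_rw [e2]
  rw [lintegral_const_mul' _ _ ENNReal.ofReal_ne_top]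
  congr 1
  have hs : ∀ z q : Q d, ∏ j, (1 + xx f z q j ^ 2)⁻¹ = ‖Φ z ω q‖ ^ 2 := fun z q => (hsq z ω q).symm
  rw [lintegral_lintegral_swap]
  · have hm5 : ∀ q : Q d, Measurable fun z : Q d => ENNReal.ofReal (f z.1 ^ d * ∏ j, (1 + xx f z q j ^ 2)⁻¹) := by
      intro q
      simp_rw [hs]
      have : Measurable fun z => Φ z ω q := (hΦd.comp (by fun_prop : Continuous fun z : Q d => (z, q))).measurable
      have := hf.measurable
      fun_prop
    have hq : ∀ q : Q d, ∫⁻ z : Q d, ‖v q‖ₑ ^ 2 * ENNReal.ofReal (f z.1 ^ d * ∏ j, (1 + xx f z q j ^ 2)⁻¹) =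
        ‖v q‖ₑ ^ 2 * ENNReal.ofReal (Real.pi ^ (d + 1)) := by
      intro q; rw [lintegral_const_mul _ (hm5 q), lapl f hf h1]
    refine (lintegral_congr hq).trans ?_
    rw [lintegral_mul_const _ (hv.measurable.enorm.pow_const 2), mul_comm]
  · simp_rw [hs]
    have := hΦd.measurable
    have := hf.measurable
    have := hv.measurable
    simp only [Function.uncurry_def]
    fun_prop
end CV

namespace CV

variable {d : ℕ}

lemma cs_en {X : Type*} [MeasurableSpace X] (μ : Measure X) (w V U : X → ENNReal) (hw : AEMeasurable w μ) (hV : AEMeasurable V μ)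
    (hU : AEMeasurable U μ) : (∫⁻ x, w x * V x * U x ∂μ) ^ 2 ≤ (∫⁻ x, w x * V x ^ 2 ∂μ) * (∫⁻ x, w x * U x ^ 2 ∂μ) := by
  have h := ENNReal.lintegral_mul_le_Lp_mul_Lq μ (p := 2) (q := 2) Real.HolderConjugate.two_two
    (f := fun x => w x ^ (1/2 : ℝ) * V x) (g := fun x => w x ^ (1/2 : ℝ) * U x) ((hw.pow_const _).mul hV) ((hw.pow_const _).mul hU)
  have e0 : ∀ y : ENNReal, (y ^ (1/2 : ℝ)) ^ 2 = y := fun y => by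
    rw [← ENNReal.rpow_natCast, ← ENNReal.rpow_mul]; norm_num
  have e1 : ∀ x, ((fun x => w x ^ (1/2 : ℝ) * V x) * (fun x => w x ^ (1/2 : ℝ) * U x)) x = w x * V x * U x := fun x => by
    simp only [Pi.mul_apply]
    nth_rw 3 [← e0 (w x)]; ring
  have e2 : ∀ (y z : ENNReal), (y ^ (1/2 : ℝ) * z) ^ (2 : ℝ) = y * z ^ 2 := fun y z => by
    rw [ENNReal.rpow_two, mul_pow, e0]
  simp_rw [e1, e2] at h
  calc _ ≤ _ := pow_le_pow_left' h 2
    _ = _ := by rw [mul_pow, e0, e0]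

lemma Cw_bd (t ħ : ℝ) (ht : t ∈ Set.Icc (0:ℝ) 1) (hh : ħ ∈ Set.Ioc (0:ℝ) 1) :
    ∫⁻ ω, ‖Cw (d := d) t ħ ω‖ₑ ≤ ENNReal.ofReal (C0 ^ (d + 1)) := by
  rw [← ofReal_integral_norm_eq_lintegral_enorm (Cw_int t ħ)]
  apply ENNReal.ofReal_le_ofReal
  have : ∀ ω : Om d, ‖Cw t ħ ω‖ = ∏ j, (fun w => ‖cS t ħ w‖) (ω j) := fun ω => by rw [Cw, norm_prod]
  simp_rw [this]
  rw [integral_fintype_prod_volume_eq_prod (E := fun _ => ℝ × ℝ) (f := fun j => fun w => ‖cS t ħ w‖)]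
  simp only [Finset.prod_const, Finset.card_univ, Fintype.card_option, Fintype.card_fin]
  exact pow_le_pow_left₀ (integral_nonneg fun _ => norm_nonneg _) (cS_bd t ħ ht hh) _

lemma ephase_c (ħ : ℝ) (p q : Q d) : ephase ħ p q = Complex.exp (Complex.I * (ħ⁻¹ * qdot p q : ℝ)) := by
  unfold ephase; congr 1; push_cast; ring

lemma ephase_c' (ħ : ℝ) (p q : Q d) : ephase ħ p (-q) = Complex.exp (Complex.I * (-ħ⁻¹ * qdot p q : ℝ)) := by
  unfold ephase; congr 1
  have : qdot p (-q) = - qdot p q := by simp [qdot]; ring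
  rw [this]; push_cast; ring

def KK (d : ℕ) (ħ : ℝ) : ENNReal := ENNReal.ofReal (C0 ^ (d + 1) * ((2 * Real.pi * ħ) ^ (d+1) * Real.pi ^ (d + 1)))

lemma bess_arith (ħ : ℝ) (hh : 0 < ħ) (X N : ENNReal) (hX : X ≤ ENNReal.ofReal (C0 ^ (d + 1))) (c : ℝ) (hc : |c| = ħ⁻¹) :
    X * (ENNReal.ofReal ((2 * Real.pi / |c|) ^ (d+1)) * (ENNReal.ofReal (Real.pi ^ (d + 1)) * N)) ≤ KK d ħ * N := by
  unfold KK
  have := C0_nonneg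
  have := Real.pi_pos
  rw [hc, div_inv_eq_mul, ENNReal.ofReal_mul (by positivity), ENNReal.ofReal_mul (by positivity)]
  calc _ ≤ ENNReal.ofReal (C0 ^ (d + 1)) * (ENNReal.ofReal ((2 * Real.pi * ħ) ^ (d+1)) * (ENNReal.ofReal (Real.pi ^ (d + 1)) * N)) := by gcongr
    _ = _ := by ring

lemma bess_phi (f : ℝ → ℝ) (hf : Continuous f) (h1 : ∀ r, 1 ≤ f r) (v : Q d → ℂ) (hv : StronglyMeasurable v)
    (hv1 : Integrable v) (hv2 : MemLp v 2) (t ħ : ℝ) (ht : t ∈ Set.Icc (0:ℝ) 1) (hh : ħ ∈ Set.Ioc (0:ℝ) 1) :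
    ∫⁻ θ : TT d, (ENNReal.ofReal (f θ.1.1.1 ^ d) * ‖Cw t ħ θ.2‖ₑ) * ‖∫ q, v q * phi f t ħ θ q‖ₑ ^ 2 ≤ KK d ħ * ∫⁻ q, ‖v q‖ₑ ^ 2 := by
  have hc : Continuous fun x : TT d × Q d => Ph f t ħ x.1.1.1 x.1.2 x.2 := by
    unfold Ph
    have h1 : ∀ j, Continuous fun x : TT d × Q d => xx f x.1.1.1 x.2 j := fun j =>
      (xx_cont f hf j).comp (by fun_prop : Continuous fun x : TT d × Q d => (x.1.1.1, x.2))
    refine (continuous_finsetProd _ fun j _ => ?_)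
    refine Continuous.mul (Continuous.inv₀ ?_ fun x => one_add_I_ne _) ?_
    · have := h1 j; fun_prop
    · have := h1 j; unfold aS; fun_prop
  have h := bessel f hf h1 v hv hv1 hv2 ħ⁻¹ (inv_ne_zero hh.1.ne') (Ph f t ħ) hc (Ph_sq f t ħ) (Cw t ħ) (Cw_int t ħ).aestronglyMeasurable
  have e : ∀ (θ : TT d) q, v q * phi f t ħ θ q = v q * Ph f t ħ θ.1.1 θ.2 q * Complex.exp (Complex.I * (ħ⁻¹ * qdot θ.1.2 q : ℝ)) := by
    intro θ q; rw [phi, ephase_c]; ring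
  simp_rw [e]
  rw [h]
  exact bess_arith ħ hh.1 _ _ (Cw_bd t ħ ht hh) _ (abs_of_pos (inv_pos.2 hh.1))

lemma bess_psi (f : ℝ → ℝ) (hf : Continuous f) (h1 : ∀ r, 1 ≤ f r) (v : Q d → ℂ) (hv : StronglyMeasurable v)
    (hv1 : Integrable v) (hv2 : MemLp v 2) (t ħ : ℝ) (ht : t ∈ Set.Icc (0:ℝ) 1) (hh : ħ ∈ Set.Ioc (0:ℝ) 1) :
    ∫⁻ θ : TT d, (ENNReal.ofReal (f θ.1.1.1 ^ d) * ‖Cw t ħ θ.2‖ₑ) * ‖∫ q, psi f t ħ θ q * v q‖ₑ ^ 2 ≤ KK d ħ * ∫⁻ q, ‖v q‖ₑ ^ 2 := by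
  have hc : Continuous fun x : TT d × Q d => Ps f t ħ x.1.1.1 x.1.2 x.2 := by
    unfold Ps
    have h1 : ∀ j, Continuous fun x : TT d × Q d => xx f x.1.1.1 x.2 j := fun j =>
      (xx_cont f hf j).comp (by fun_prop : Continuous fun x : TT d × Q d => (x.1.1.1, x.2))
    refine (continuous_finsetProd _ fun j _ => ?_)
    refine Continuous.mul (Continuous.inv₀ ?_ fun x => one_sub_I_ne _) ?_
    · have := h1 j; fun_prop
    · have := h1 j; unfold bS; fun_prop
  have h := bessel f hf h1 v hv hv1 hv2 (-ħ⁻¹) (neg_ne_zero.2 (inv_ne_zero hh.1.ne')) (Ps f t ħ) hc (Ps_sq f t ħ) (Cw t ħ) (Cw_int t ħ).aestronglyMeasurable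
  have e : ∀ (θ : TT d) q, psi f t ħ θ q * v q = v q * Ps f t ħ θ.1.1 θ.2 q * Complex.exp (Complex.I * (-ħ⁻¹ * qdot θ.1.2 q : ℝ)) := by
    intro θ q; rw [psi, ephase_c']; ring
  simp_rw [e]
  rw [h]
  exact bess_arith ħ hh.1 _ _ (Cw_bd t ħ ht hh) _ (by rw [abs_neg, abs_of_pos (inv_pos.2 hh.1)])

lemma BB_bd (f : ℝ → ℝ) (h1 : ∀ r, 1 ≤ f r) (t ħ : ℝ) (b : Q d × Q d → ℂ) (Mb : ℝ) (hMb : ∀ x, ‖b x‖ ≤ Mb) (θ : TT d) :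
    ‖BB f t ħ b θ‖ₑ ≤ ENNReal.ofReal Mb * (ENNReal.ofReal (f θ.1.1.1 ^ d) * ‖Cw t ħ θ.2‖ₑ) := by
  rw [BB, enorm_mul, enorm_mul]
  have e1 : ‖(((f θ.1.1.1) ^ d : ℝ) : ℂ)‖ₑ = ENNReal.ofReal (f θ.1.1.1 ^ d) := by
    rw [← ofReal_norm, Complex.norm_real, Real.norm_of_nonneg]
    exact pow_nonneg (by linarith [h1 θ.1.1.1]) _
  have e2 : ‖b θ.1‖ₑ ≤ ENNReal.ofReal Mb := by
    rw [← ofReal_norm]; exact ENNReal.ofReal_le_ofReal (hMb _)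
  rw [e1]
  calc _ ≤ ENNReal.ofReal (f θ.1.1.1 ^ d) * ENNReal.ofReal Mb * ‖Cw t ħ θ.2‖ₑ := by gcongr
    _ = _ := by ring

lemma l2Cc (f : ℝ → ℝ) (hf : ContDiff ℝ (⊤ : ℕ∞) f) (h1 : ∀ r, 1 ≤ f r)
    {a : Q d × Q d → ℂ} (ha : Cc a) (t ħ : ℝ) (ht : t ∈ Set.Icc (0:ℝ) 1) (hh : ħ ∈ Set.Ioc (0:ℝ) 1)
    {u : Q d → ℂ} (hu : Continuous u) (hu2 : HasCompactSupport u) (Mb : ℝ) (hM0 : 0 ≤ Mb) (hMb : ∀ x, ‖bb f a x‖ ≤ Mb) :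
    Continuous (Op ħ t a u) ∧
    ∫⁻ q, ‖Op ħ t a u q‖ₑ ^ 2 ≤ ENNReal.ofReal ((C0 * Real.pi) ^ (d + 1) * Mb) ^ 2 * ∫⁻ q, ‖u q‖ₑ ^ 2 := by
  have hfc := hf.continuous
  have hBi := BB_int f hfc t ħ (bb_Cc f hf h1 ha)
  have hui := hu.integrable_of_hasCompactSupport hu2 (μ := volume)
  have hu2' : MemLp u 2 := hu.memLp_of_hasCompactSupport hu2
  set B := BB f t ħ (bb f a) with hB
  set U : TT d → ℂ := fun θ => ∫ q', psi f t ħ θ q' * u q' with hU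
  have hUm : StronglyMeasurable U := by
    have h0 : StronglyMeasurable fun x : TT d × Q d => psi f t ħ x.1 x.2 * u x.2 := by
      have := psi_cont (d := d) f hfc t ħ
      exact Continuous.stronglyMeasurable (by fun_prop)
    exact h0.integral_prod_right'
  have hUb : ∀ θ, ‖U θ‖ ≤ ∫ q, ‖u q‖ := by
    intro θ
    refine (norm_integral_le_integral_norm _).trans (integral_mono_of_nonneg (Filter.Eventually.of_forall fun _ => norm_nonneg _) hui.norm
      (Filter.Eventually.of_forall fun q => ?_))
    simp only [norm_mul]; exact mul_le_of_le_one_left (norm_nonneg _) (psi_le ..)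
  have hBU : Integrable fun θ => B θ * U θ :=
    hBi.mul_bdd (c := ∫ q, ‖u q‖) hUm.aestronglyMeasurable (Filter.Eventually.of_forall hUb)
  set g : Q d → ℂ := fun q => ∫ θ, B θ * phi f t ħ θ q * U θ with hg
  have hop : ∀ q, Op ħ t a u q = ((2 * Real.pi * ħ) ^ (d + 1) : ℝ)⁻¹ • g q := main3 f hf h1 ha t ħ hh.1.ne' hu hu2
  have hphic : ∀ q, Continuous fun θ => phi (d := d) f t ħ θ q := fun q => (phi_cont f hfc t ħ).comp (by fun_prop : Continuous fun θ : TT d => (θ, q))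
  have hphic' : ∀ θ, Continuous fun q => phi (d := d) f t ħ θ q := fun θ => (phi_cont f hfc t ħ).comp (by fun_prop : Continuous fun q : Q d => (θ, q))
  have hle : ∀ q θ, ‖B θ * phi f t ħ θ q * U θ‖ ≤ ‖B θ * U θ‖ := by
    intro q θ
    rw [mul_right_comm, norm_mul]; exact mul_le_of_le_one_right (norm_nonneg _) (phi_le ..)
  have hgc : Continuous g := by
    refine continuous_of_dominated (bound := fun θ => ‖B θ * U θ‖) (fun q => ?_) (fun q => Filter.Eventually.of_forall (hle q)) hBU.norm ?_
    · exact (hBi.aestronglyMeasurable.mul (hphic q).aestronglyMeasurable).mul hUm.aestronglyMeasurable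
    · exact Filter.Eventually.of_forall fun θ => (continuous_const.mul (hphic' θ)).mul continuous_const
  have hopc : Continuous (Op ħ t a u) := by
    rw [show Op ħ t a u = fun q => ((2 * Real.pi * ħ) ^ (d + 1) : ℝ)⁻¹ • g q from funext hop]
    fun_prop
  refine ⟨hopc, ?_⟩
  have key : ∀ k : ℕ, ∫⁻ q in Metric.closedBall (0 : Q d) k, ‖g q‖ₑ ^ 2 ≤ (ENNReal.ofReal Mb * KK d ħ) ^ 2 * ∫⁻ q, ‖u q‖ₑ ^ 2 := by
    intro k
    set S := Metric.closedBall (0 : Q d) k with hS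
    have hSm : MeasurableSet S := Metric.isClosed_closedBall.measurableSet
    have hSc : IsCompact S := isCompact_closedBall _ _
    set v : Q d → ℂ := S.indicator fun q => (starRingEnd ℂ) (g q) with hv
    have hgc' : Continuous fun q => (starRingEnd ℂ) (g q) := Complex.continuous_conj.comp hgc
    have hvm : StronglyMeasurable v := hgc'.stronglyMeasurable.indicator hSm
    have hv1 : Integrable v := (integrable_indicator_iff hSm).2 (hgc'.continuousOn.integrableOn_compact hSc)
    obtain ⟨Cg, hCg⟩ := hSc.exists_bound_of_continuousOn hgc'.continuousOn
    have hv2 : MemLp v 2 := by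
      refine (memLp_indicator_const 2 hSm Cg (Or.inr hSc.measure_lt_top.ne)).of_le hvm.aestronglyMeasurable (Filter.Eventually.of_forall fun q => ?_)
      by_cases hq : q ∈ S
      · simp only [hv, Set.indicator_of_mem hq]; exact (hCg q hq).trans (le_abs_self _)
      · simp [hv, Set.indicator_of_notMem hq]
    have hvg : ∀ q, v q * g q = ((‖v q‖ ^ 2 : ℝ) : ℂ) := by
      intro q
      by_cases hq : q ∈ S
      · simp only [hv, Set.indicator_of_mem hq, RCLike.norm_conj]
        rw [mul_comm, Complex.mul_conj, Complex.normSq_eq_norm_sq]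
      · simp [hv, Set.indicator_of_notMem hq]
    have hN : ∫⁻ q in S, ‖g q‖ₑ ^ 2 = ∫⁻ q, ‖v q‖ₑ ^ 2 := by
      rw [← lintegral_indicator hSm]
      congr 1; ext q
      by_cases hq : q ∈ S
      · simp only [hv, Set.indicator_of_mem hq, RCLike.enorm_conj]
      · simp [hv, Set.indicator_of_notMem hq]
    have hNf : ∫⁻ q, ‖v q‖ₑ ^ 2 ≠ ⊤ := by
      have := hv2.eLpNorm_lt_top
      have h3 := (eLpNorm_lt_top_iff_lintegral_rpow_enorm_lt_top (p := 2) (by norm_num) (by norm_num)).1 this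
      simp only [ENNReal.toReal_ofNat, ENNReal.rpow_two] at h3
      exact h3.ne
    set V : TT d → ℂ := fun θ => ∫ q, v q * phi f t ħ θ q with hV
    have hVm : StronglyMeasurable V := by
      have h0 : StronglyMeasurable fun x : TT d × Q d => v x.2 * phi f t ħ x.1 x.2 := 
        (hvm.comp_measurable measurable_snd).mul (phi_cont (d := d) f hfc t ħ).stronglyMeasurable
      exact h0.integral_prod_right'
    have hfub : ∫ q, v q * g q = ∫ θ, B θ * V θ * U θ := by
      have e1 : ∀ q, v q * g q = ∫ θ, v q * (B θ * phi f t ħ θ q * U θ) := fun q => by rw [integral_const_mul]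
      simp_rw [e1]
      rw [integral_integral_swap]
      · congr 1; ext θ
        have e2 : ∀ q, v q * (B θ * phi f t ħ θ q * U θ) = (B θ * U θ) * (v q * phi f t ħ θ q) := fun q => by ring
        simp_rw [e2]
        rw [integral_const_mul]; simp only [hV]; ring
      · have hp : Integrable fun x : Q d × TT d => v x.1 * (B x.2 * U x.2) := hv1.mul_prod hBU
        have c1 : Continuous fun x : Q d × TT d => phi f t ħ x.2 x.1 :=
          ((phi_cont f hfc t ħ).comp (by fun_prop : Continuous fun x : Q d × TT d => (x.2, x.1)))
        refine (hp.mul_bdd (c := 1) c1.aestronglyMeasurable (Filter.Eventually.of_forall fun x => phi_le ..)).congr (Filter.Eventually.of_forall fun x => ?_)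
        simp only [Function.uncurry_def]; ring
    have hNe : ∫⁻ q, ‖v q‖ₑ ^ 2 = ‖∫ q, v q * g q‖ₑ := by
      simp_rw [hvg]
      rw [integral_complex_ofReal, ← ofReal_norm, Complex.norm_real, Real.norm_of_nonneg (integral_nonneg fun q => by positivity),
        ofReal_integral_eq_lintegral_ofReal]
      · simp_rw [enorm_sq]
      · exact hv2.integrable_norm_pow (by norm_num)
      · exact Filter.Eventually.of_forall fun q => by positivity
    have hwm : AEMeasurable (fun θ : TT d => ENNReal.ofReal (f θ.1.1.1 ^ d) * ‖Cw t ħ θ.2‖ₑ) := by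
      have := hfc.measurable
      have h7 : Measurable fun θ : TT d => ENNReal.ofReal (f θ.1.1.1 ^ d) := by fun_prop
      refine h7.aemeasurable.mul ?_
      rw [Measure.volume_eq_prod]
      exact (Cw_int t ħ).aestronglyMeasurable.comp_snd.enorm
    have hN2 : ∫⁻ q, ‖v q‖ₑ ^ 2 ≤ ENNReal.ofReal Mb * ∫⁻ θ, (ENNReal.ofReal (f θ.1.1.1 ^ d) * ‖Cw t ħ θ.2‖ₑ) * ‖V θ‖ₑ * ‖U θ‖ₑ := by
      rw [hNe, hfub, ← lintegral_const_mul' _ _ ENNReal.ofReal_ne_top]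
      refine (enorm_integral_le_lintegral_enorm _).trans (lintegral_mono fun θ => ?_)
      simp only [enorm_mul]
      calc _ ≤ (ENNReal.ofReal Mb * (ENNReal.ofReal (f θ.1.1.1 ^ d) * ‖Cw t ħ θ.2‖ₑ)) * ‖V θ‖ₑ * ‖U θ‖ₑ := by
            gcongr; exact BB_bd f h1 t ħ _ Mb hMb θ
        _ = _ := by ring
    have hcs := cs_en volume (fun θ : TT d => ENNReal.ofReal (f θ.1.1.1 ^ d) * ‖Cw t ħ θ.2‖ₑ) (fun θ => ‖V θ‖ₑ) (fun θ => ‖U θ‖ₑ)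
      hwm hVm.measurable.enorm.aemeasurable hUm.measurable.enorm.aemeasurable
    have hb1 := bess_phi f hfc h1 v hvm hv1 hv2 t ħ ht hh
    have hb2 := bess_psi f hfc h1 u hu.stronglyMeasurable hui hu2' t ħ ht hh
    rw [hN]
    set N := ∫⁻ q, ‖v q‖ₑ ^ 2
    set Nu := ∫⁻ q, ‖u q‖ₑ ^ 2
    have h5 : N * N ≤ N * ((ENNReal.ofReal Mb * KK d ħ) ^ 2 * Nu) := by
      calc N * N = N ^ 2 := by ring
        _ ≤ (ENNReal.ofReal Mb * ∫⁻ θ, (ENNReal.ofReal (f θ.1.1.1 ^ d) * ‖Cw t ħ θ.2‖ₑ) * ‖V θ‖ₑ * ‖U θ‖ₑ) ^ 2 := pow_le_pow_left' hN2 2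
        _ ≤ ENNReal.ofReal Mb ^ 2 * ((KK d ħ * N) * (KK d ħ * Nu)) := by
          rw [mul_pow]
          gcongr
          exact hcs.trans (mul_le_mul' hb1 hb2)
        _ = _ := by ring
    by_cases hN0 : N = 0
    · rw [hN0]; exact zero_le
    · exact (ENNReal.mul_le_mul_iff_right hN0 hNf).1 h5
  have hall : ∫⁻ q, ‖g q‖ₑ ^ 2 ≤ (ENNReal.ofReal Mb * KK d ħ) ^ 2 * ∫⁻ q, ‖u q‖ₑ ^ 2 := by
    have h6 : (⋃ k : ℕ, Metric.closedBall (0 : Q d) k) = Set.univ := Metric.iUnion_closedBall_nat 0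
    rw [← setLIntegral_univ, ← h6, setLIntegral_iUnion_of_directed]
    · exact iSup_le key
    · exact Monotone.directed_le fun i j hij => Metric.closedBall_subset_closedBall (by exact_mod_cast hij)
  have hpos : 0 < (2 * Real.pi * ħ) ^ (d + 1) := by have := Real.pi_pos; have := hh.1; positivity
  simp_rw [hop]
  have e3 : ∀ q, ‖((2 * Real.pi * ħ) ^ (d + 1) : ℝ)⁻¹ • g q‖ₑ ^ 2 = ENNReal.ofReal (((2 * Real.pi * ħ) ^ (d + 1) : ℝ)⁻¹) ^ 2 * ‖g q‖ₑ ^ 2 := by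
    intro q
    rw [enorm_smul, mul_pow, Real.enorm_of_nonneg (inv_nonneg.2 hpos.le)]
  simp_rw [e3]
  rw [lintegral_const_mul' _ _ (ENNReal.pow_ne_top ENNReal.ofReal_ne_top)]
  calc _ ≤ ENNReal.ofReal (((2 * Real.pi * ħ) ^ (d + 1) : ℝ)⁻¹) ^ 2 * ((ENNReal.ofReal Mb * KK d ħ) ^ 2 * ∫⁻ q, ‖u q‖ₑ ^ 2) := by gcongr
    _ = (ENNReal.ofReal (((2 * Real.pi * ħ) ^ (d + 1) : ℝ)⁻¹) * (ENNReal.ofReal Mb * KK d ħ)) ^ 2 * ∫⁻ q, ‖u q‖ₑ ^ 2 := by ring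
    _ = _ := by
      rw [KK, ← ENNReal.ofReal_mul hM0, ← ENNReal.ofReal_mul (by positivity)]
      congr 3
      rw [mul_pow C0]; field_simp
end CV

namespace CV

variable {d : ℕ}

abbrev Sm (h : Q d × Q d → ℂ) : Prop := ContDiff ℝ (⊤ : ℕ∞) h

def Dw (w : List (Lt d)) (h : Q d × Q d → ℂ) : Q d × Q d → ℂ := w.foldr (fun c => dirD (vec c)) h

def Wt (f : ℝ → ℝ) (x : Q d × Q d) : Lt d → ℝ
  | (false, j) => Fj f x.1.1 j
  | (true, j) => (Fj f x.1.1 j)⁻¹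

def Ww (f : ℝ → ℝ) (x : Q d × Q d) (w : List (Lt d)) : ℝ := (w.map (Wt f x)).prod

lemma Fj_pos (f : ℝ → ℝ) (h1 : ∀ r, 1 ≤ f r) (r : ℝ) (j : Option (Fin d)) : 0 < Fj f r j := by
  rcases j with _ | i <;> simp [Fj]
  linarith [h1 r]

lemma Wt_pos (f : ℝ → ℝ) (h1 : ∀ r, 1 ≤ f r) (x : Q d × Q d) (c : Lt d) : 0 < Wt f x c := by
  rcases c with ⟨_|_, j⟩ <;> simp only [Wt]
  · exact Fj_pos f h1 _ _
  · exact inv_pos.2 (Fj_pos f h1 _ _)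

lemma Ww_pos (f : ℝ → ℝ) (h1 : ∀ r, 1 ≤ f r) (x : Q d × Q d) (w : List (Lt d)) : 0 < Ww f x w := by
  refine List.prod_pos fun y hy => ?_
  obtain ⟨c, -, rfl⟩ := List.mem_map.1 hy
  exact Wt_pos f h1 x c

lemma Ww_append (f : ℝ → ℝ) (x : Q d × Q d) (w w' : List (Lt d)) : Ww f x (w ++ w') = Ww f x w * Ww f x w' := by
  simp [Ww]

lemma Ww_single (f : ℝ → ℝ) (x : Q d × Q d) (c : Lt d) : Ww f x [c] = Wt f x c := by
  simp [Ww]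

lemma om_Wt (f : ℝ → ℝ) (h1 : ∀ r, 1 ≤ f r) (x : Q d × Q d) (c : Lt d) : |om f c x| * Wt f x c = 1 := by
  rcases c with ⟨_|_, j⟩ <;> simp only [Wt, om] <;> have := Fj_pos f h1 x.1.1 j
  · rw [abs_of_pos (by positivity)]; field_simp
  · rw [abs_neg, abs_of_pos this]; field_simp

lemma Dw_append (w w' : List (Lt d)) (h : Q d × Q d → ℂ) : Dw (w ++ w') h = Dw w (Dw w' h) := List.foldr_append

lemma Dw_smooth (w : List (Lt d)) {h : Q d × Q d → ℂ} (hh : Sm h) : Sm (Dw w h) := by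
  induction w with
  | nil => exact hh
  | cons c l ih => exact dirD_smooth ih _

lemma dirD_add' (v : Q d × Q d) {g h : Q d × Q d → ℂ} (hg : Sm g) (hh : Sm h) :
    dirD v (fun x => g x + h x) = fun x => dirD v g x + dirD v h x := by
  ext x
  simp only [dirD]
  rw [fderiv_fun_add (hg.differentiable (by simp) x) (hh.differentiable (by simp) x)]; rfl

lemma dirD_mul' (v : Q d × Q d) {g h : Q d × Q d → ℂ} (hg : Sm g) (hh : Sm h) :
    dirD v (fun x => g x * h x) = fun x => dirD v g x * h x + g x * dirD v h x := by
  ext x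
  simp only [dirD]
  rw [fderiv_fun_mul (hg.differentiable (by simp) x) (hh.differentiable (by simp) x)]
  simp; ring

lemma Dw_add (w : List (Lt d)) {g h : Q d × Q d → ℂ} (hg : Sm g) (hh : Sm h) :
    Dw w (fun x => g x + h x) = fun x => Dw w g x + Dw w h x := by
  induction w with
  | nil => rfl
  | cons c l ih =>
    simp only [Dw, List.foldr_cons] at ih ⊢
    rw [ih]
    exact dirD_add' _ (Dw_smooth l hg) (Dw_smooth l hh)

lemma dirD_om (f : ℝ → ℝ) (hf : ContDiff ℝ (⊤ : ℕ∞) f) (h1 : ∀ r, 1 ≤ f r) (c c' : Lt d)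
    (hc : c ≠ (false, none) ∨ c' = (false, none)) :
    dirD (vec c) (fun x => (om f c' x : ℂ)) = fun _ => 0 := by
  ext x
  have hs : ContDiff ℝ (⊤ : ℕ∞) (fun x => (om f c' x : ℂ)) := Complex.ofRealCLM.contDiff.comp (om_smooth f hf h1 c')
  have h2 := (hs.differentiable (by simp) x).hasFDerivAt.hasLineDerivAt (vec c)
  unfold HasLineDerivAt at h2
  have h3 : (fun t : ℝ => (om f c' (x + t • vec c) : ℂ)) = fun _ => (om f c' x : ℂ) := by
    ext t
    rcases hc with hc | hc
    · have := om_inv f c c' hc x (-t)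
      rw [neg_smul, sub_neg_eq_add] at this
      rw [this]
    · rw [hc, om_one, om_one]
  rw [h3] at h2
  exact h2.unique (hasDerivAt_const _ _)

lemma Dw_om (f : ℝ → ℝ) (hf : ContDiff ℝ (⊤ : ℕ∞) f) (h1 : ∀ r, 1 ≤ f r) (c' : Lt d) (w : List (Lt d))
    (hw : ∀ c ∈ w, c ≠ (false, none) ∨ c' = (false, none)) {h : Q d × Q d → ℂ} (hh : Sm h) :
    Dw w (fun x => (om f c' x : ℂ) * h x) = fun x => (om f c' x : ℂ) * Dw w h x := by
  have hs : ContDiff ℝ (⊤ : ℕ∞) (fun x => (om f c' x : ℂ)) := Complex.ofRealCLM.contDiff.comp (om_smooth f hf h1 c')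
  induction w with
  | nil => rfl
  | cons c l ih =>
    simp only [Dw, List.foldr_cons] at ih ⊢
    rw [ih (fun c hc => hw c (List.mem_cons_of_mem _ hc))]
    refine (dirD_mul' _ hs (Dw_smooth l hh)).trans ?_
    rw [dirD_om f hf h1 c c' (hw c (by simp))]
    ext x; simp [Dw]

def Bd (f : ℝ → ℝ) (S : Lt d → Prop) (K : ℕ) (M : ℝ) (x : Q d × Q d) (h : Q d × Q d → ℂ) : Prop :=
  ∀ w : List (Lt d), (∀ c ∈ w, S c) → w.length ≤ K → ‖Dw w h x‖ ≤ M * Ww f x w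

lemma Bd_A (f : ℝ → ℝ) (hf : ContDiff ℝ (⊤ : ℕ∞) f) (h1 : ∀ r, 1 ≤ f r) (S : Lt d → Prop) (K : ℕ) (M : ℝ) (x : Q d × Q d)
    {h : Q d × Q d → ℂ} (hh : Sm h) (c' : Lt d) (hS : S c') (hc : ∀ c, S c → c ≠ (false, none) ∨ c' = (false, none))
    (hb : Bd f S (K + 1) M x h) : Bd f S K (2 * M) x (Aop f c' h) := by
  intro w hw hl
  have hs : ContDiff ℝ (⊤ : ℕ∞) (fun x => (om f c' x : ℂ)) := Complex.ofRealCLM.contDiff.comp (om_smooth f hf h1 c')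
  have hd := dirD_smooth hh (vec c')
  have e : Dw w (Aop f c' h) = fun x => Dw w h x + (om f c' x : ℂ) * Dw (w ++ [c']) h x := by
    rw [Dw_append]
    have := Dw_om f hf h1 c' w (fun c hcw => hc c (hw c hcw)) hd
    change Dw w (fun x => h x + (om f c' x : ℂ) * dirD (vec c') h x) = _
    rw [Dw_add w hh (hs.mul hd), this]; rfl
  rw [e]
  have b1 := hb w hw (by omega)
  have b2 := hb (w ++ [c']) (by intro c hc; rcases List.mem_append.1 hc with h | h; exact hw c h; simp at h; rw [h]; exact hS) (by simp; omega)
  rw [Ww_append, Ww_single] at b2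
  refine (norm_add_le _ _).trans ?_
  rw [norm_mul, Complex.norm_real, Real.norm_eq_abs]
  have h3 : |om f c' x| * ‖Dw (w ++ [c']) h x‖ ≤ M * Ww f x w := by
    calc _ ≤ |om f c' x| * (M * (Ww f x w * Wt f x c')) := by gcongr
      _ = (|om f c' x| * Wt f x c') * (M * Ww f x w) := by ring
      _ = _ := by rw [om_Wt f h1, one_mul]
  linarith

lemma word_Sm (f : ℝ → ℝ) (hf : ContDiff ℝ (⊤ : ℕ∞) f) (h1 : ∀ r, 1 ≤ f r) (l : List (Lt d))
    {h : Q d × Q d → ℂ} (hh : Sm h) : Sm (word f l h) := by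
  induction l with
  | nil => exact hh
  | cons c l ih => exact A_smooth ih _ (om_smooth f hf h1 c)

lemma Bd_word (f : ℝ → ℝ) (hf : ContDiff ℝ (⊤ : ℕ∞) f) (h1 : ∀ r, 1 ≤ f r) (S : Lt d → Prop) (M : ℝ) (x : Q d × Q d)
    {h : Q d × Q d → ℂ} (hh : Sm h) (l : List (Lt d)) (hl : ∀ c ∈ l, S c ∧ ∀ c'', S c'' → c'' ≠ (false, none) ∨ c = (false, none)) (K : ℕ)
    (hb : Bd f S (K + l.length) M x h) : Bd f S K (2 ^ l.length * M) x (word f l h) := by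
  induction l generalizing K with
  | nil => simpa [word] using hb
  | cons c l ih =>
    have := ih (fun c hc => hl c (List.mem_cons_of_mem _ hc)) (K + 1) (by
      rw [List.length_cons] at hb
      rwa [show K + 1 + l.length = K + (l.length + 1) by ring])
    have h2 := Bd_A f hf h1 S K _ x (word_Sm f hf h1 l hh) c (hl c (by simp)).1 (hl c (by simp)).2 this
    rw [List.length_cons, pow_succ', mul_assoc]
    exact h2

lemma bb_bound (f : ℝ → ℝ) (hf : ContDiff ℝ (⊤ : ℕ∞) f) (h1 : ∀ r, 1 ≤ f r) (M : ℝ) (x : Q d × Q d)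
    {a : Q d × Q d → ℂ} (ha : Sm a) (hb : Bd f (fun _ => True) (5 * (d + 1)) M x a) : ‖bb f a x‖ ≤ 2 ^ (5 * (d + 1)) * M := by
  obtain ⟨l, hl, hl2, hl3⟩ := bq_word (d := d) f
  have s1 := Bd_word f hf h1 (fun _ => True) M x ha [(false, none), (false, none)] (by simp) (3 * (d + 1) + 2 * d)
    (by simpa [show 3 * (d + 1) + 2 * d + 2 = 5 * (d + 1) by ring] using hb)
  have s2 : Bd f (fun c => c ≠ (false, none)) (0 + (Lp d ++ l).length) (2 ^ 2 * M) x (word f [(false, none), (false, none)] a) := by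
    intro w _ hw
    refine s1 w (fun _ _ => trivial) ?_
    rw [List.length_append, Lp_len, hl, zero_add] at hw
    exact hw
  have s3 := Bd_word f hf h1 _ _ x (word_Sm f hf h1 _ ha) (Lp d ++ l) (by
    intro c hc
    refine ⟨?_, fun c'' h => Or.inl h⟩
    rcases List.mem_append.1 hc with h | h
    · exact Lp_mem c h
    · exact hl2 c h) 0 s2
  have := s3 [] (by simp) (by simp)
  rw [List.length_append, Lp_len, hl, word_append, ← hl3] at this
  simp only [Dw, List.foldr_nil, Ww, List.map_nil, List.prod_nil, mul_one] at this
  rw [bb]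
  refine this.trans (le_of_eq ?_)
  rw [← mul_assoc, ← pow_add]; congr 2; ring

lemma Bd_mul (f : ℝ → ℝ) (h1 : ∀ r, 1 ≤ f r) (x : Q d × Q d) (w : List (Lt d)) : ∀ (M1 M2 : ℝ)
    {g h : Q d × Q d → ℂ} (_ : Sm g) (_ : Sm h) 
    (_ : Bd f (fun _ => True) w.length M1 x g) (_ : Bd f (fun _ => True) w.length M2 x h),
    ‖Dw w (fun x => g x * h x) x‖ ≤ 2 ^ w.length * (M1 * M2) * Ww f x w := by
  induction w using List.reverseRecOn with
  | nil =>
    intro M1 M2 g h hg hh bg bh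
    have a1 := bg [] (by simp) (by simp)
    have a2 := bh [] (by simp) (by simp)
    simp only [Dw, List.foldr_nil, Ww, List.map_nil, List.prod_nil, mul_one, List.length_nil, pow_zero, one_mul, norm_mul] at a1 a2 ⊢
    exact mul_le_mul a1 a2 (norm_nonneg _) ((norm_nonneg _).trans a1)
  | append_singleton l c ih =>
    intro M1 M2 g h hg hh bg bh
    simp only [List.length_append, List.length_singleton] at bg bh ⊢
    have hW := Wt_pos f h1 x c
    have sh : ∀ (M : ℝ) (k : Q d × Q d → ℂ), Bd f (fun _ => True) (l.length + 1) M x k → 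
        Bd f (fun _ => True) l.length (M * Wt f x c) x (dirD (vec c) k) := by
      intro M k bk w hw hl
      have := bk (w ++ [c]) (by simp) (by simp; omega)
      rw [Ww_append, Ww_single, Dw_append] at this
      refine this.trans (le_of_eq (by ring))
    have dn : ∀ (M : ℝ) (k : Q d × Q d → ℂ), Bd f (fun _ => True) (l.length + 1) M x k → 
        Bd f (fun _ => True) l.length M x k := fun M k bk w hw hl => bk w hw (by omega)
    have e : Dw (l ++ [c]) (fun x => g x * h x) = fun x => Dw l (fun x => dirD (vec c) g x * h x) x + Dw l (fun x => g x * dirD (vec c) h x) x := by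
      rw [Dw_append]
      change Dw l (dirD (vec c) (fun x => g x * h x)) = _
      rw [dirD_mul' _ hg hh, Dw_add l ((dirD_smooth hg _).mul hh) (hg.mul (dirD_smooth hh _))]
    rw [e]
    have i1 := ih (M1 * Wt f x c) M2 (dirD_smooth hg (vec c)) hh (sh _ _ bg) (dn _ _ bh)
    have i2 := ih M1 (M2 * Wt f x c) hg (dirD_smooth hh (vec c)) (dn _ _ bg) (sh _ _ bh)
    refine (norm_add_le _ _).trans ((add_le_add i1 i2).trans (le_of_eq ?_))
    rw [Ww_append, Ww_single, pow_succ]; ring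

lemma Bd_prod (f : ℝ → ℝ) (h1 : ∀ r, 1 ≤ f r) (x : Q d × Q d) (K : ℕ) (M1 M2 : ℝ) (hM1 : 0 ≤ M1) (hM2 : 0 ≤ M2)
    {g h : Q d × Q d → ℂ} (hg : Sm g) (hh : Sm h) 
    (bg : Bd f (fun _ => True) K M1 x g) (bh : Bd f (fun _ => True) K M2 x h) :
    Bd f (fun _ => True) K (2 ^ K * (M1 * M2)) x (fun x => g x * h x) := by
  intro w _ hl
  have := Bd_mul f h1 x w M1 M2 hg hh (fun w' h' hl' => bg w' h' (hl'.trans hl)) (fun w' h' hl' => bh w' h' (hl'.trans hl))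
  refine this.trans ?_
  have := (Ww_pos f h1 x w).le
  gcongr
  norm_num
end CV

namespace CV

variable {d : ℕ}

lemma dirD_comm (u v : Q d × Q d) {h : Q d × Q d → ℂ} (hh : Sm h) : dirD u (dirD v h) = dirD v (dirD u h) := by
  ext x
  have hd : DifferentiableAt ℝ (fderiv ℝ h) x := (hh.fderiv_right (m := (⊤ : ℕ∞)) (by simp)).differentiable (by simp) x
  have e : ∀ w z : Q d × Q d, dirD w (dirD z h) x = fderiv ℝ (fderiv ℝ h) x w z := by
    intro w z
    unfold dirD
    rw [fderiv_clm_apply hd (differentiableAt_const _)]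
    simp
  rw [e, e]
  have := (hh.contDiffAt (x := x)).isSymmSndFDerivAt (by rw [minSmoothness_of_isRCLikeNormedField]; exact WithTop.coe_le_coe.2 (le_top : (2:ℕ∞) ≤ ⊤))
  exact this u v

lemma Dw_perm {w w' : List (Lt d)} (p : w.Perm w') {h : Q d × Q d → ℂ} (hh : Sm h) : Dw w h = Dw w' h := by
  induction p with
  | nil => rfl
  | cons c _ ih => exact congrArg (dirD (vec c)) ih
  | swap c c' l => exact dirD_comm _ _ (Dw_smooth l hh)
  | trans _ _ h1 h2 => exact h1.trans h2

lemma Dw_rep (n : ℕ) (c : Lt d) (h : Q d × Q d → ℂ) : Dw (List.replicate n c) h = (dirD (vec c))^[n] h := by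
  induction n with
  | zero => rfl
  | succ n ih => 
    rw [List.replicate_succ, Function.iterate_succ_apply', ← ih]; rfl

lemma Dw_flat (b : Bool) (α : Fin d → ℕ) (L : List (Fin d)) (h : Q d × Q d → ℂ) :
    Dw (L.flatMap fun i => List.replicate (α i) (b, some i)) h = L.foldr (fun i h => (dirD (vec (b, some i)))^[α i] h) h := by
  induction L with
  | nil => rfl
  | cons i L ih => rw [List.flatMap_cons, Dw_append, ih, Dw_rep]; rfl

def cw (b : Bool) (α : MIdx d) : List (Lt d) :=
  List.replicate α.1 (b, none) ++ (List.finRange d).flatMap fun i => List.replicate (α.2 i) (b, some i)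

lemma mderiv2_word (α β : MIdx d) (h : Q d × Q d → ℂ) : mderiv2 α β h = Dw (cw false α ++ cw true β) h := by
  rw [Dw_append, cw, cw, Dw_append, Dw_append, Dw_flat, Dw_flat, Dw_rep, Dw_rep]
  rfl

lemma sum_map_finRange {M : Type*} [AddCommMonoid M] (g : Fin d → M) : ((List.finRange d).map g).sum = ∑ i, g i := by
  rw [← List.ofFn_eq_map, List.sum_ofFn]

lemma count_cw (b b' : Bool) (α : MIdx d) (j : Option (Fin d)) :
    (cw b α).count (b', j) = if b = b' then (match j with | none => α.1 | some i => α.2 i) else 0 := by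
  rw [cw, List.count_append, List.count_flatMap, sum_map_finRange]
  rcases j with _ | i
  · by_cases hb : b = b' <;> simp [List.count_replicate, hb]
  · by_cases hb : b = b' <;> simp [List.count_replicate, hb]

lemma len_cw (b : Bool) (α : MIdx d) : (cw b α).length = deg α := by
  simp [cw, deg, List.length_flatMap, sum_map_finRange]

lemma prod_flatMap' {X : Type*} (L : List X) (g : X → List ℝ) : (L.flatMap g).prod = (L.map fun i => (g i).prod).prod := by
  induction L with
  | nil => rfl
  | cons i L ih => rw [List.flatMap_cons, List.prod_append, ih, List.map_cons, List.prod_cons]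

lemma Ww_cw0 (f : ℝ → ℝ) (x : Q d × Q d) (α : MIdx d) : Ww f x (cw false α) = f x.1.1 ^ degA α := by
  simp only [cw, Ww, List.map_append, List.prod_append, List.map_replicate, List.prod_replicate, Wt, Fj, one_pow, one_mul,
    List.map_flatMap, degA]
  rw [← Finset.prod_pow_eq_pow_sum, prod_flatMap']
  simp only [List.prod_replicate]
  rw [← List.ofFn_eq_map, List.prod_ofFn]

lemma Ww_cw1 (f : ℝ → ℝ) (x : Q d × Q d) (α : MIdx d) : Ww f x (cw true α) = ((f x.1.1)⁻¹) ^ degA α := by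
  simp only [cw, Ww, List.map_append, List.prod_append, List.map_replicate, List.prod_replicate, Wt, Fj, inv_one, one_pow, one_mul,
    List.map_flatMap, degA]
  rw [← Finset.prod_pow_eq_pow_sum, prod_flatMap']
  simp only [List.prod_replicate]
  rw [← List.ofFn_eq_map, List.prod_ofFn]

lemma word_mderiv (w : List (Lt d)) : ∃ α β : MIdx d, w.Perm (cw false α ++ cw true β) := by
  refine ⟨(w.count (false, none), fun i => w.count (false, some i)), (w.count (true, none), fun i => w.count (true, some i)), ?_⟩
  rw [List.perm_iff_count]
  rintro ⟨b, j⟩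
  rw [List.count_append, count_cw, count_cw]
  rcases b with _ | _ <;> rcases j with _ | i <;> simp

lemma brF_ge (f : ℝ → ℝ) (x : Q d × Q d) : 1 ≤ brF f x := by
  unfold brF
  rw [Real.one_le_sqrt]
  have : 0 ≤ ∑ i, (x.2.2 i / f x.1.1) ^ 2 := Finset.sum_nonneg fun i _ => sq_nonneg _
  nlinarith [sq_nonneg x.2.1]

lemma deg_mem (N : ℕ) (α : MIdx d) (h : deg α ≤ N) : α ∈ idxSet d N := by
  have h2 := h
  unfold deg at h2
  simp only [idxSet, Finset.mem_filter, Finset.mem_product, Finset.mem_range, Fintype.mem_piFinset]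
  refine ⟨⟨by omega, fun i => ?_⟩, h⟩
  have := Finset.single_le_sum (f := α.2) (fun _ _ => Nat.zero_le _) (Finset.mem_univ i)
  omega

lemma sym_term_nonneg (f : ℝ → ℝ) (h1 : ∀ r, 1 ≤ f r) (a : Q d × Q d → ℂ) (α β : MIdx d) (x : Q d × Q d) :
    0 ≤ f x.1.1 ^ (-(degA α : ℝ) + (degA β : ℝ)) * brF f x ^ (-0 + (deg β : ℝ)) * ‖mderiv2 α β a x‖ := by
  have := brF_ge f x
  have := h1 x.1.1
  have h2 : 0 ≤ f x.1.1 := by linarith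
  have h3 : 0 ≤ brF f x := by linarith
  positivity

lemma symNorm_nonneg (f : ℝ → ℝ) (h1 : ∀ r, 1 ≤ f r) (N : ℕ) (a : Q d × Q d → ℂ) : 0 ≤ symNorm f 0 N a := by
  unfold symNorm
  refine Finset.sum_nonneg fun α _ => Finset.sum_nonneg fun β _ => ?_
  split_ifs
  · exact Real.iSup_nonneg fun x => sym_term_nonneg f h1 a α β x
  · exact le_rfl

lemma sym_bd (f : ℝ → ℝ) (h1 : ∀ r, 1 ≤ f r) (N : ℕ) {a : Q d × Q d → ℂ} (ha : IsSymbol f 0 a) (α β : MIdx d)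
    (h : deg α + deg β ≤ N) (x : Q d × Q d) : ‖mderiv2 α β a x‖ ≤ symNorm f 0 N a * (f x.1.1 ^ degA α * ((f x.1.1)⁻¹) ^ degA β) := by
  set T : Q d × Q d → ℝ := fun x => f x.1.1 ^ (-(degA α : ℝ) + (degA β : ℝ)) * brF f x ^ (-0 + (deg β : ℝ)) * ‖mderiv2 α β a x‖ with hT
  have hbdd : BddAbove (Set.range T) := by
    obtain ⟨C, hC⟩ := ha.2 α β
    refine ⟨C, ?_⟩
    rintro _ ⟨y, rfl⟩
    have b1 := brF_ge f y
    have b2 := h1 y.1.1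
    have h2 : 0 < f y.1.1 := by linarith
    have h3 : 0 < brF f y := by linarith
    simp only [hT]
    calc _ ≤ f y.1.1 ^ (-(degA α : ℝ) + (degA β : ℝ)) * brF f y ^ (-0 + (deg β : ℝ)) * 
          (C * f y.1.1 ^ ((degA α : ℝ) - (degA β : ℝ)) * brF f y ^ (0 - (deg β : ℝ))) := by
            gcongr; exact hC y
      _ = C * (f y.1.1 ^ (-(degA α : ℝ) + (degA β : ℝ)) * f y.1.1 ^ ((degA α : ℝ) - (degA β : ℝ))) * 
          (brF f y ^ (-0 + (deg β : ℝ)) * brF f y ^ (0 - (deg β : ℝ))) := by ring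
      _ = C := by
        rw [← Real.rpow_add h2, ← Real.rpow_add h3]; ring_nf; simp
  have s1 : (⨆ y, T y) ≤ symNorm f 0 N a := by
    unfold symNorm
    have hnn : ∀ α' β' : MIdx d, 0 ≤ (if deg α' + deg β' ≤ N then
      ⨆ x : Q d × Q d, f x.1.1 ^ (-(degA α' : ℝ) + (degA β' : ℝ)) * brF f x ^ (-0 + (deg β' : ℝ)) * ‖mderiv2 α' β' a x‖ else 0) := by
      intro α' β'
      split_ifs
      · exact Real.iSup_nonneg fun x => sym_term_nonneg f h1 a α' β' x
      · exact le_rfl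
    refine le_trans ?_ (Finset.single_le_sum (fun α' _ => Finset.sum_nonneg fun β' _ => hnn α' β') (deg_mem N α (by omega)))
    refine le_trans ?_ (Finset.single_le_sum (fun β' _ => hnn α β') (deg_mem N β (by omega)))
    rw [if_pos h]
  have s2 := (le_ciSup hbdd x).trans s1
  have b1 := brF_ge f x
  have b2 := h1 x.1.1
  have h2 : 0 < f x.1.1 := by linarith
  have h3 : 1 ≤ brF f x ^ (-0 + (deg β : ℝ)) := Real.one_le_rpow b1 (by simp)
  have s3 : f x.1.1 ^ (-(degA α : ℝ) + (degA β : ℝ)) * ‖mderiv2 α β a x‖ ≤ symNorm f 0 N a := by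
    refine le_trans ?_ s2
    simp only [hT]
    rw [mul_right_comm]
    exact le_mul_of_one_le_right (by positivity) h3
  have e : f x.1.1 ^ (-(degA α : ℝ) + (degA β : ℝ)) * (f x.1.1 ^ degA α * ((f x.1.1)⁻¹) ^ degA β) = 1 := by
    rw [Real.rpow_add h2, Real.rpow_neg h2.le, Real.rpow_natCast, Real.rpow_natCast, inv_pow]; field_simp
  calc ‖mderiv2 α β a x‖ = (f x.1.1 ^ (-(degA α : ℝ) + (degA β : ℝ)) * (f x.1.1 ^ degA α * ((f x.1.1)⁻¹) ^ degA β)) * ‖mderiv2 α β a x‖ := by rw [e, one_mul]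
    _ = (f x.1.1 ^ (-(degA α : ℝ) + (degA β : ℝ)) * ‖mderiv2 α β a x‖) * (f x.1.1 ^ degA α * ((f x.1.1)⁻¹) ^ degA β) := by ring
    _ ≤ _ := by gcongr

lemma sym_Bd (f : ℝ → ℝ) (h1 : ∀ r, 1 ≤ f r) (N : ℕ) {a : Q d × Q d → ℂ} (ha : IsSymbol f 0 a) (x : Q d × Q d) :
    Bd f (fun _ => True) N (symNorm f 0 N a) x a := by
  intro w _ hw
  obtain ⟨α, β, p⟩ := word_mderiv w
  have hl := p.length_eq
  rw [List.length_append, len_cw, len_cw] at hl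
  have hW : Ww f x w = f x.1.1 ^ degA α * ((f x.1.1)⁻¹) ^ degA β := by
    rw [← Ww_cw0, ← Ww_cw1, ← Ww_append]
    exact (p.map _).prod_eq
  rw [Dw_perm p ha.1, ← mderiv2_word, hW]
  exact sym_bd f h1 N ha α β (by omega) x
end CV

namespace CV

variable {d : ℕ}

def chi0 (d : ℕ) : ContDiffBump (0 : Q d) := ⟨1, 2, one_pos, one_lt_two⟩
def chi (q : Q d) : ℂ := ((chi0 d q : ℝ) : ℂ)

lemma chi_smooth : ContDiff ℝ (⊤ : ℕ∞) (chi (d := d)) := Complex.ofRealCLM.contDiff.comp (chi0 d).contDiff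

lemma chi_le (q : Q d) : ‖chi q‖ ≤ 1 := by
  rw [chi, Complex.norm_real, Real.norm_of_nonneg (chi0 d).nonneg]; exact (chi0 d).le_one

lemma chi_one (q : Q d) (h : ‖q‖ ≤ 1) : chi q = 1 := by
  rw [chi, (chi0 d).one_of_mem_closedBall (by simpa [chi0] using h)]; simp

lemma chi_supp (q : Q d) (h : chi q ≠ 0) : ‖q‖ ≤ 2 := by
  by_contra h2
  apply h
  rw [chi, (chi0 d).zero_of_le_dist (by rw [dist_zero_right]; exact (not_le.1 h2).le)]; simp

def Psi (δ ε : ℝ) (x : Q d × Q d) : ℂ := chi (δ • x.1) * chi (ε • x.2)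

lemma Psi_Cc {δ ε : ℝ} (hδ : 0 < δ) (hε : 0 < ε) : Cc (Psi (d := d) δ ε) := by
  constructor
  · unfold Psi
    have e1 : ContDiff ℝ (⊤ : ℕ∞) fun x : Q d × Q d => δ • x.1 := (δ • ContinuousLinearMap.fst ℝ (Q d) (Q d)).contDiff
    have e2 : ContDiff ℝ (⊤ : ℕ∞) fun x : Q d × Q d => ε • x.2 := (ε • ContinuousLinearMap.snd ℝ (Q d) (Q d)).contDiff
    have e3 : ContDiff ℝ (⊤ : ℕ∞) fun x : Q d × Q d => chi (δ • x.1) := chi_smooth.comp e1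
    have e4 : ContDiff ℝ (⊤ : ℕ∞) fun x : Q d × Q d => chi (ε • x.2) := chi_smooth.comp e2
    exact e3.mul e4
  · refine HasCompactSupport.intro ((isCompact_closedBall (0 : Q d) (2 / δ)).prod (isCompact_closedBall (0 : Q d) (2 / ε))) fun x hx => ?_
    by_contra h0
    apply hx
    have a1 := chi_supp _ (left_ne_zero_of_mul h0)
    have a2 := chi_supp _ (right_ne_zero_of_mul h0)
    rw [norm_smul, Real.norm_of_nonneg hδ.le] at a1
    rw [norm_smul, Real.norm_of_nonneg hε.le] at a2
    rw [Set.mem_prod, mem_closedBall_zero_iff, mem_closedBall_zero_iff, le_div_iff₀ hδ, le_div_iff₀ hε]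
    constructor <;> linarith

def sc (δ ε : ℝ) : Lt d → ℝ
  | (false, _) => δ
  | (true, _) => ε

lemma Dw_Psi (δ ε : ℝ) (w : List (Lt d)) : Dw w (Psi δ ε) = fun x => (((w.map (sc δ ε)).prod : ℝ) : ℂ) * Dw w (Psi 1 1) (δ • x.1, ε • x.2) := by
  induction w with
  | nil => ext x; simp [Dw, Psi]
  | cons c l ih =>
    change dirD (vec c) (Dw l (Psi δ ε)) = fun x => _ * dirD (vec c) (Dw l (Psi 1 1)) _
    rw [ih]
    ext x
    set g := Dw l (Psi (d := d) 1 1) with hg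
    have hgs : Sm g := Dw_smooth l (Psi_Cc one_pos one_pos).1
    set Λ : (Q d × Q d) →L[ℝ] (Q d × Q d) := (δ • ContinuousLinearMap.fst ℝ (Q d) (Q d)).prod (ε • ContinuousLinearMap.snd ℝ (Q d) (Q d)) with hΛ
    have h1 : HasFDerivAt (fun x : Q d × Q d => g (δ • x.1, ε • x.2)) ((fderiv ℝ g (Λ x)).comp Λ) x :=
      ((hgs.differentiable (by simp) (Λ x)).hasFDerivAt).comp x Λ.hasFDerivAt
    have h2 := (h1.const_mul (((l.map (sc δ ε)).prod : ℝ) : ℂ)).fderiv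
    simp only [dirD]
    rw [h2]
    have h3 : Λ (vec c) = sc δ ε c • vec c := by
      rcases c with ⟨_|_, j⟩ <;> simp [hΛ, vec, sc]
    simp only [smul_apply, ContinuousLinearMap.comp_apply, h3, map_smul, List.map_cons, List.prod_cons]
    have : Λ x = (δ • x.1, ε • x.2) := rfl
    rw [this]
    simp only [smul_eq_mul, Complex.real_smul]
    push_cast; ring

lemma Dw_supp (w : List (Lt d)) (x : Q d × Q d) (h : Dw w (Psi 1 1) x ≠ 0) : ‖x.1‖ ≤ 2 := by
  have h1 : ∀ w : List (Lt d), tsupport (Dw w (Psi 1 1)) ⊆ tsupport (Psi (d := d) 1 1) := by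
    intro w
    induction w with
    | nil => exact subset_rfl
    | cons c l ih =>
      refine subset_trans ?_ ih
      change tsupport (dirD (vec c) (Dw l (Psi 1 1))) ⊆ _
      refine closure_minimal (fun y hy => ?_) (isClosed_tsupport _)
      refine (support_fderiv_subset ℝ (f := Dw l (Psi (d := d) 1 1))) ?_
      intro h0
      apply hy
      simp only [dirD]
      rw [h0]; rfl
  have h2 := h1 w (subset_tsupport _ h)
  have h3 : tsupport (Psi (d := d) 1 1) ⊆ {x | ‖x.1‖ ≤ 2} := by
    refine closure_minimal (fun y hy => ?_) (isClosed_le (by fun_prop) continuous_const)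
    have := chi_supp _ (left_ne_zero_of_mul hy)
    simpa using this
  exact h3 h2

lemma Psi_const (d K : ℕ) : ∃ C : ℝ, 0 ≤ C ∧ ∀ w : List (Lt d), w.length ≤ K → ∀ x, ‖Dw w (Psi 1 1) x‖ ≤ C := by
  have h1 : ∀ w : List (Lt d), ∃ C, ∀ x, ‖Dw w (Psi 1 1) x‖ ≤ C := by
    intro w
    have : Cc (Dw w (Psi (d := d) 1 1)) := by
      induction w with
      | nil => exact Psi_Cc one_pos one_pos
      | cons c l ih => exact ih.dirD _
    exact this.bdd
  choose C hC using h1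
  obtain ⟨B, hB⟩ := ((List.finite_length_le (Lt d) K).image C).bddAbove
  refine ⟨max B 0, le_max_right _ _, fun w hw x => (hC w x).trans ((hB ⟨w, hw, rfl⟩).trans (le_max_left _ _))⟩

lemma Psi_Bd (f : ℝ → ℝ) (h1 : ∀ r, 1 ≤ f r) (K : ℕ) (C : ℝ) (hC0 : 0 ≤ C)
    (hC : ∀ w : List (Lt d), w.length ≤ K → ∀ x, ‖Dw w (Psi 1 1) x‖ ≤ C) (δ ε : ℝ) (hδ : 0 < δ) (hδ1 : δ ≤ 1) (hε : 0 < ε)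
    (hε2 : ∀ r, |δ * r| ≤ 2 → ε * f r ≤ 1) (x : Q d × Q d) : Bd f (fun _ => True) K C x (Psi δ ε) := by
  intro w _ hw
  rw [Dw_Psi]
  by_cases h0 : Dw w (Psi 1 1) (δ • x.1, ε • x.2) = 0
  · simp only [h0, mul_zero, norm_zero]; exact mul_nonneg hC0 (Ww_pos f h1 x w).le
  · have h2 := Dw_supp w _ h0
    have h3 : |δ * x.1.1| ≤ 2 := (norm_fst_le (δ • x.1)).trans h2
    have h4 := hε2 _ h3
    have hfp : 0 < f x.1.1 := by linarith [h1 x.1.1]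
    have hs : ∀ c : Lt d, 0 ≤ sc δ ε c ∧ sc δ ε c ≤ Wt f x c := by
      have : ε ≤ 1 := by nlinarith [h1 x.1.1]
      rintro ⟨_|_, _|i⟩ <;> simp only [sc, Wt, Fj]
      · exact ⟨hδ.le, hδ1⟩
      · exact ⟨hδ.le, hδ1.trans (h1 _)⟩
      · exact ⟨hε.le, by simpa using this⟩
      · refine ⟨hε.le, ?_⟩
        rw [← one_div, le_div_iff₀ hfp]; exact h4
    have h5 : 0 ≤ (w.map (sc δ ε)).prod ∧ (w.map (sc δ ε)).prod ≤ Ww f x w := by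
      clear h0 hw
      induction w with
      | nil => simp [Ww]
      | cons c l ih =>
        replace ih := ih (by simp)
        simp only [List.map_cons, List.prod_cons, Ww] at ih ⊢
        exact ⟨mul_nonneg (hs c).1 ih.1, mul_le_mul (hs c).2 ih.2 ih.1 (Wt_pos f h1 x c).le⟩
    rw [norm_mul, Complex.norm_real, Real.norm_of_nonneg h5.1, mul_comm]
    exact mul_le_mul (hC w hw _) h5.2 h5.1 hC0

lemma eps_exists (f : ℝ → ℝ) (hf : Continuous f) (h1 : ∀ r, 1 ≤ f r) (δ : ℝ) (hδ : 0 < δ) : 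
    ∃ ε : ℝ, 0 < ε ∧ ε ≤ δ ∧ ∀ r, |δ * r| ≤ 2 → ε * f r ≤ 1 := by
  obtain ⟨F, hF⟩ := (isCompact_Icc (a := -(2 / δ)) (b := 2 / δ)).exists_bound_of_continuousOn hf.continuousOn
  have hF1 : 1 ≤ max F 1 := le_max_right _ _
  refine ⟨min δ (1 / max F 1), lt_min hδ (by positivity), min_le_left _ _, fun r hr => ?_⟩
  rw [abs_mul, abs_of_pos hδ] at hr
  have h2 : |r| ≤ 2 / δ := by rw [le_div_iff₀ hδ]; linarith
  have h3 : f r ≤ max F 1 := ((le_abs_self _).trans (hF r (abs_le.1 h2))).trans (le_max_left _ _)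
  have h4 : 0 < f r := by linarith [h1 r]
  calc _ ≤ 1 / max F 1 * max F 1 := by
        refine mul_le_mul (min_le_right _ _) h3 h4.le (by positivity)
    _ = 1 := by field_simp
end CV

namespace CV

variable {d : ℕ}

lemma op_lim (a : Q d × Q d → ℂ) (t ħ : ℝ) {u : Q d → ℂ} (hu2 : HasCompactSupport u)
    (δ ε : ℕ → ℝ) (hδ0 : ∀ k, 0 < δ k) (hδ : Filter.Tendsto δ Filter.atTop (nhds 0)) (hε : Filter.Tendsto ε Filter.atTop (nhds 0)) (q : Q d)
    (hI : Integrable fun p : Q d => ∫ q' : Q d, a (t • q + (1 - t) • q', p) * ephase ħ p (q - q') * u q') :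
    Filter.Tendsto (fun k => Op ħ t (fun x => a x * Psi (δ k) (ε k) x) u q) Filter.atTop (nhds (Op ħ t a u q)) := by
  obtain ⟨R, hR⟩ := (hu2.isCompact.image (by fun_prop : Continuous fun q' : Q d => t • q + (1 - t) • q')).isBounded.exists_norm_le
  set I : Q d → ℂ := fun p : Q d => ∫ q' : Q d, a (t • q + (1 - t) • q', p) * ephase ħ p (q - q') * u q' with hIdef
  have hev : ∀ᶠ k in Filter.atTop, δ k * |R| < 1 := by
    have : Filter.Tendsto (fun k => δ k * |R|) Filter.atTop (nhds (0 * |R|)) := hδ.mul_const _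
    rw [zero_mul] at this
    exact this.eventually_lt_const one_pos
  have hlim : Filter.Tendsto (fun k => ∫ p, chi (ε k • p) * I p) Filter.atTop (nhds (∫ p, I p)) := by
    have hcc : Continuous (chi (d := d)) := chi_smooth.continuous
    refine tendsto_integral_of_dominated_convergence (fun p => ‖I p‖) (fun k => ?_) hI.norm (fun k => Filter.Eventually.of_forall fun p => ?_)
      (Filter.Eventually.of_forall fun p => ?_)
    · exact (hcc.comp (by fun_prop : Continuous fun p : Q d => ε k • p)).aestronglyMeasurable.mul hI.aestronglyMeasurable
    · rw [norm_mul]; exact mul_le_of_le_one_left (norm_nonneg _) (chi_le _)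
    · have h1 : Filter.Tendsto (fun k => ε k • p) Filter.atTop (nhds 0) := by
        have := hε.smul_const p
        rwa [zero_smul] at this
      have h2 := ((hcc.tendsto 0).comp h1).mul_const (I p)
      rwa [chi_one 0 (by simp), one_mul] at h2
  refine (hlim.const_smul (((2 * Real.pi * ħ) ^ (d + 1) : ℝ)⁻¹)).congr' ?_
  filter_upwards [hev] with k hk
  unfold Op
  congr 1
  congr 1; ext p
  simp only [hIdef]
  rw [← integral_const_mul]
  congr 1; ext q'
  by_cases h0 : u q' = 0
  · simp [h0]
  · have h3 : ‖t • q + (1 - t) • q'‖ ≤ R := hR _ ⟨q', subset_tsupport _ h0, rfl⟩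
    have h4 : chi (δ k • (t • q + (1 - t) • q')) = 1 := by
      apply chi_one
      rw [norm_smul, Real.norm_of_nonneg (hδ0 k).le]
      exact (mul_le_mul_of_nonneg_left (h3.trans (le_abs_self R)) (hδ0 k).le).trans hk.le
    simp only [Psi, h4]; ring

lemma l2bound (d : ℕ) (f : ℝ → ℝ) (hf : ContDiff ℝ (⊤ : ℕ∞) f) (h1 : ∀ r, 1 ≤ f r) : ∃ C : ℝ, 0 < C ∧ ∀ a : Q d × Q d → ℂ, IsSymbol f 0 a →
      ∀ t ∈ Set.Icc (0 : ℝ) 1, ∀ ħ ∈ Set.Ioc (0 : ℝ) 1, ∀ u : Q d → ℂ, Continuous u → HasCompactSupport u → 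
      ∫⁻ q, ‖Op ħ t a u q‖ₑ ^ 2 ≤ ENNReal.ofReal (C * symNorm f 0 (5 * (d + 1)) a) ^ 2 * ∫⁻ q, ‖u q‖ₑ ^ 2 := by
  set N := 5 * (d + 1) with hN
  obtain ⟨CX, hCX0, hCX⟩ := Psi_const d N
  have hp := Real.pi_pos
  have hC0 := C0_nonneg
  refine ⟨(C0 * Real.pi) ^ (d + 1) * (2 ^ N * (2 ^ N * CX)) + 1, by positivity, ?_⟩
  intro a ha t ht ħ hh u hu hu2
  have hs := symNorm_nonneg f h1 N a
  set δ : ℕ → ℝ := fun k => 1 / ((k : ℝ) + 1) with hδ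
  have hδ0 : ∀ k, 0 < δ k := fun k => by simp only [hδ]; positivity
  have hδ1 : ∀ k, δ k ≤ 1 := fun k => by
    simp only [hδ]; rw [div_le_one (by positivity)]; linarith [(Nat.cast_nonneg k : (0:ℝ) ≤ k)]
  choose ε hε0 hεδ hε using fun k => eps_exists f hf.continuous h1 (δ k) (hδ0 k)
  have hδt : Filter.Tendsto δ Filter.atTop (nhds 0) := tendsto_one_div_add_atTop_nhds_zero_nat
  have hεt : Filter.Tendsto ε Filter.atTop (nhds 0) := squeeze_zero (fun k => (hε0 k).le) hεδ hδt
  set ak : ℕ → Q d × Q d → ℂ := fun k x => a x * Psi (δ k) (ε k) x with hak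
  set Mb : ℝ := 2 ^ N * (2 ^ N * (symNorm f 0 N a * CX)) with hMb
  have hMb0 : 0 ≤ Mb := by positivity
  have hP : ∀ k, Cc (Psi (d := d) (δ k) (ε k)) := fun k => Psi_Cc (hδ0 k) (hε0 k)
  have hk : ∀ k, Continuous (Op ħ t (ak k) u) ∧
      ∫⁻ q, ‖Op ħ t (ak k) u q‖ₑ ^ 2 ≤ ENNReal.ofReal ((C0 * Real.pi) ^ (d + 1) * Mb) ^ 2 * ∫⁻ q, ‖u q‖ₑ ^ 2 := by
    intro k
    have hc : Cc (ak k) := ⟨ha.1.mul (hP k).1, (hP k).2.mul_left⟩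
    refine l2Cc f hf h1 hc t ħ ht hh hu hu2 Mb hMb0 fun x => ?_
    refine bb_bound f hf h1 _ x hc.1 ?_
    exact Bd_prod f h1 x N _ _ hs hCX0 ha.1 (hP k).1 (sym_Bd f h1 N ha x) 
      (Psi_Bd f h1 N CX hCX0 hCX (δ k) (ε k) (hδ0 k) (hδ1 k) (hε0 k) (hε k) x)
  have hpt : ∀ q, ‖Op ħ t a u q‖ₑ ^ 2 ≤ Filter.liminf (fun k => ‖Op ħ t (ak k) u q‖ₑ ^ 2) Filter.atTop := by
    intro q
    by_cases hI : Integrable fun p : Q d => ∫ q' : Q d, a (t • q + (1 - t) • q', p) * ephase ħ p (q - q') * u q'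
    · have h2 := op_lim a t ħ hu2 δ ε hδ0 hδt hεt q hI
      have h3 : Filter.Tendsto (fun k => ‖Op ħ t (ak k) u q‖ₑ ^ 2) Filter.atTop (nhds (‖Op ħ t a u q‖ₑ ^ 2)) :=
        (((ENNReal.continuous_pow 2).comp continuous_enorm).tendsto _).comp h2
      exact h3.liminf_eq.ge
    · have : Op ħ t a u q = 0 := by
        unfold Op
        rw [integral_undef hI, smul_zero]
      rw [this]; simp
  calc ∫⁻ q, ‖Op ħ t a u q‖ₑ ^ 2 ≤ ∫⁻ q, Filter.liminf (fun k => ‖Op ħ t (ak k) u q‖ₑ ^ 2) Filter.atTop := lintegral_mono hpt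
    _ ≤ Filter.liminf (fun k => ∫⁻ q, ‖Op ħ t (ak k) u q‖ₑ ^ 2) Filter.atTop :=
      lintegral_liminf_le fun k => (hk k).1.measurable.enorm.pow_const 2
    _ ≤ ENNReal.ofReal ((C0 * Real.pi) ^ (d + 1) * Mb) ^ 2 * ∫⁻ q, ‖u q‖ₑ ^ 2 :=
      Filter.liminf_le_of_frequently_le' (Filter.Frequently.of_forall fun k => (hk k).2)
    _ ≤ _ := by
      refine mul_le_mul' (pow_le_pow_left' (ENNReal.ofReal_le_ofReal ?_) 2) le_rfl
      rw [hMb, add_mul]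
      have : 0 ≤ 1 * symNorm f 0 N a := by positivity
      refine le_trans (le_of_eq ?_) (le_add_of_nonneg_right this)
      ring

lemma int_le {X : Type*} [MeasurableSpace X] (μ : Measure X) (g : X → ℂ) (B : ℝ) (hB : 0 ≤ B) (h : ∫⁻ q, ‖g q‖ₑ ^ 2 ∂μ ≤ ENNReal.ofReal B) :
    ∫ q, ‖g q‖ ^ 2 ∂μ ≤ B := by
  by_cases hi : Integrable (fun q => ‖g q‖ ^ 2) μ
  · rw [← ENNReal.ofReal_le_ofReal_iff hB, ofReal_integral_eq_lintegral_ofReal hi (Filter.Eventually.of_forall fun _ => by positivity)]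
    simp_rw [← enorm_sq]
    exact h
  · rw [integral_undef hi]; exact hB
end CV

/-- Calderón–Vaillancourt type `L²` boundedness theorem. -/
theorem statement6 (d : ℕ) (f : ℝ → ℝ) (hf : GoodF f) :
    ∃ C > (0 : ℝ), ∃ N : ℕ, ∀ a : Q d × Q d → ℂ, IsSymbol f 0 a →
      ∀ t ∈ Set.Icc (0 : ℝ) 1, ∀ ℏ ∈ Set.Ioc (0 : ℝ) 1, ∀ u : Q d → ℂ, IsCc u →
        l2norm (Op ℏ t a u) ≤ C * symNorm f 0 N a * l2norm u := by
  obtain ⟨C, hC, h⟩ := CV.l2bound d f hf.1 hf.2.1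
  refine ⟨C, hC, 5 * (d + 1), ?_⟩
  intro a ha t ht ħ hh u hu
  have hs := CV.symNorm_nonneg f hf.2.1 (5 * (d + 1)) a
  have hb := h a ha t ht ħ hh u hu.1.continuous hu.2
  set M := C * symNorm f 0 (5 * (d + 1)) a with hM
  have hM0 : 0 ≤ M := by positivity
  have hui : Integrable fun q => ‖u q‖ ^ 2 := 
    (hu.1.continuous.memLp_of_hasCompactSupport (p := 2) (μ := volume) hu.2).integrable_norm_pow (by norm_num)
  have hun : 0 ≤ ∫ q, ‖u q‖ ^ 2 := integral_nonneg fun q => by positivity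
  have e : ∫⁻ q, ‖u q‖ₑ ^ 2 = ENNReal.ofReal (∫ q, ‖u q‖ ^ 2) := by
    rw [ofReal_integral_eq_lintegral_ofReal hui (Filter.Eventually.of_forall fun _ => by positivity)]
    simp_rw [CV.enorm_sq]
  rw [e, ← ENNReal.ofReal_pow hM0, ← ENNReal.ofReal_mul (by positivity)] at hb
  have h2 := CV.int_le volume _ _ (by positivity) hb
  unfold l2norm
  rw [← Real.sqrt_eq_rpow, ← Real.sqrt_eq_rpow]
  calc _ ≤ Real.sqrt (M ^ 2 * ∫ q, ‖u q‖ ^ 2) := Real.sqrt_le_sqrt h2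
    _ = _ := by rw [Real.sqrt_mul (by positivity), Real.sqrt_sq hM0]

end
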